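/- arXiv:2602.09978 — 2 statements merged into one kernel-verified Lean document; each statement's English description precedes it below -/
import Mathlib

section
/- Let G_1, …, G_k be connected finite simple graphs with pairwise-disjoint vertex sets except that a single vertex a belongs to every G_i. Assume each G_i is not a-outer geometric 1-planar and has at most m edges. If k ≥ m + 2, then the union of G_1, …, G_k is not geometric 1-planar. -/
open Set

noncomputable section

/-- The union of all (closed) straight-line edge segments of a geometric drawing. -/
def drawnSet {V : Type*} (G : SimpleGraph V) (pos : V → ℝ × ℝ) : Set (ℝ × ℝ) :=
  {x | ∃ u v, G.Adj u v ∧ x ∈ segment ℝ (pos u) (pos v)}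

/-- `pos` is a geometric (straight-line) drawing of `G`: vertices are distinct points,
no edge passes through a vertex other than its endpoints, and any two distinct edges
meet only in common endpoints or in a single proper crossing point interior to both. -/
def IsGeomDrawing {V : Type*} (G : SimpleGraph V) (pos : V → ℝ × ℝ) : Prop :=
  Function.Injective pos ∧
  (∀ u v, G.Adj u v → ∀ w : V, pos w ∈ segment ℝ (pos u) (pos v) → w = u ∨ w = v) ∧
  (∀ u v x y, G.Adj u v → G.Adj x y → s(u, v) ≠ s(x, y) →
    (segment ℝ (pos u) (pos v) ∩ segment ℝ (pos x) (pos y) ⊆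
        (pos '' {u, v}) ∩ (pos '' {x, y})) ∨
    (∃ p, segment ℝ (pos u) (pos v) ∩ segment ℝ (pos x) (pos y) = {p} ∧
        p ∈ openSegment ℝ (pos u) (pos v) ∧ p ∈ openSegment ℝ (pos x) (pos y)))

/-- The straight-line edges `uv` and `xy` cross properly: they meet in exactly one
point, interior to both segments. -/
def SegCross {V : Type*} (pos : V → ℝ × ℝ) (u v x y : V) : Prop :=
  ∃ p, segment ℝ (pos u) (pos v) ∩ segment ℝ (pos x) (pos y) = {p} ∧
    p ∈ openSegment ℝ (pos u) (pos v) ∧ p ∈ openSegment ℝ (pos x) (pos y)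

/-- The set of edges of `G` that cross the edge `uv` in the geometric drawing `pos`. -/
def crossingEdges {V : Type*} (G : SimpleGraph V) (pos : V → ℝ × ℝ) (u v : V) :
    Set (Sym2 V) :=
  {e | e ∈ G.edgeSet ∧ ∃ x y, e = s(x, y) ∧ SegCross pos u v x y}

/-- `pos` is a geometric 1-planar drawing of `G`: a geometric drawing in which every
edge is crossed at most once. -/
def IsGeom1Planar {V : Type*} (G : SimpleGraph V) (pos : V → ℝ × ℝ) : Prop :=
  IsGeomDrawing G pos ∧ ∀ u v, G.Adj u v → (crossingEdges G pos u v).Subsingleton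

/-- `G` is geometric 1-planar. -/
def GeomOnePlanar {V : Type*} (G : SimpleGraph V) : Prop :=
  ∃ pos : V → ℝ × ℝ, IsGeom1Planar G pos
/-- In the geometric drawing `pos` of `G`, the vertices `a` and `b` lie in (the closure
of) a common region, i.e. a common connected component of the complement of the drawing. -/
def SharedRegion {V : Type*} (G : SimpleGraph V) (pos : V → ℝ × ℝ) (a b : V) : Prop :=
  ∃ x, x ∉ drawnSet G pos ∧
    pos a ∈ closure (connectedComponentIn (drawnSet G pos)ᶜ x) ∧
    pos b ∈ closure (connectedComponentIn (drawnSet G pos)ᶜ x)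

/-- `a` and `b` lie on a common unbounded (outer) region of the drawing. -/
def OuterSharedRegion {V : Type*} (G : SimpleGraph V) (pos : V → ℝ × ℝ) (a b : V) : Prop :=
  ∃ x, x ∉ drawnSet G pos ∧
    ¬ Bornology.IsBounded (connectedComponentIn (drawnSet G pos)ᶜ x) ∧
    pos a ∈ closure (connectedComponentIn (drawnSet G pos)ᶜ x) ∧
    pos b ∈ closure (connectedComponentIn (drawnSet G pos)ᶜ x)

/-- `a` lies on an unbounded (outer) region of the drawing. -/
def OuterVertexRegion {V : Type*} (G : SimpleGraph V) (pos : V → ℝ × ℝ) (a : V) : Prop :=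
  ∃ x, x ∉ drawnSet G pos ∧
    ¬ Bornology.IsBounded (connectedComponentIn (drawnSet G pos)ᶜ x) ∧
    pos a ∈ closure (connectedComponentIn (drawnSet G pos)ᶜ x)

/-- `G` is `(a,b)`-shared geometric 1-planar. -/
def SharedGeomOnePlanar {V : Type*} (G : SimpleGraph V) (a b : V) : Prop :=
  ∃ pos, IsGeom1Planar G pos ∧ SharedRegion G pos a b

/-- `G` is `(a,b)`-outer geometric 1-planar. -/
def OuterSharedGeomOnePlanar {V : Type*} (G : SimpleGraph V) (a b : V) : Prop :=
  ∃ pos, IsGeom1Planar G pos ∧ OuterSharedRegion G pos a b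

/-- `G` is `a`-outer geometric 1-planar. -/
def OuterGeomOnePlanar {V : Type*} (G : SimpleGraph V) (a : V) : Prop :=
  ∃ pos, IsGeom1Planar G pos ∧ OuterVertexRegion G pos a

/-!
Fix a geometric 1-planar drawing of the union and let `v` be a rightmost vertex among `a` and the
vertices incident to edges. Since no `H i` has `a` on its outer region, `v ≠ a`, so `v` belongs to
a single graph `H i`. Walk from `v` to `a` in `H i`, starting in the outer region of every other
`H j`: as `a` is not on that region, an edge of `H i` must cross an edge of `H j`. Each edge of
`H i` is crossed at most once, so these edges are distinct and `H i` has at least `k - 1 > m` edges.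
-/

section Segment

variable {E : Type*} [AddCommGroup E] [Module ℝ E] [TopologicalSpace E] [T2Space E]
  [ContinuousAdd E] [ContinuousSMul ℝ E] {x y p : E}

theorem segment_subset_closure_segment_sdiff_singleton (hp : p ∉ openSegment ℝ x y) :
    segment ℝ x y ⊆ closure (segment ℝ x y \ {p}) :=
  (closure_openSegment x y).superset.trans
    (closure_mono (subset_sdiff_singleton (openSegment_subset_segment ℝ x y) hp))

theorem isPreconnected_segment_sdiff_singleton (hp : p ∉ openSegment ℝ x y) :
    IsPreconnected (segment ℝ x y \ {p}) :=
  (convex_openSegment x y).isPreconnected.subset_closure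
    (subset_sdiff_singleton (openSegment_subset_segment ℝ x y) hp)
    (sdiff_subset.trans (closure_openSegment x y).superset)

end Segment

section RightHalfPlane

variable {c : ℝ} {p : ℝ × ℝ} {C D : Set (ℝ × ℝ)}

theorem mem_closure_rightHalfPlane (hp : c ≤ p.1) : p ∈ closure (Ioi c ×ˢ (univ : Set ℝ)) := by
  rw [closure_prod_eq, closure_Ioi, closure_univ]
  exact ⟨hp, mem_univ _⟩

theorem not_isBounded_of_rightHalfPlane_subset (hC : Ioi c ×ˢ univ ⊆ C) :
    ¬ Bornology.IsBounded C := fun hb =>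
  not_bddAbove_Ioi c ((hb.subset hC).fst_of_prod univ_nonempty).bddAbove

theorem rightHalfPlane_subset_connectedComponentIn (hD : D ⊆ Iic c ×ˢ univ) (hpD : p ∉ D)
    (hp : c ≤ p.1) : Ioi c ×ˢ univ ⊆ connectedComponentIn Dᶜ p := by
  have hpre : IsPreconnected (insert p (Ioi c ×ˢ (univ : Set ℝ))) :=
    ((convex_Ioi c).prod convex_univ).isPreconnected.subset_closure (subset_insert _ _)
      (insert_subset (mem_closure_rightHalfPlane hp) subset_closure)
  have hdisj : insert p (Ioi c ×ˢ univ) ⊆ Dᶜ :=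
    insert_subset hpD fun q hq hqD => not_lt_of_ge (mem_Iic.1 (hD hqD).1) hq.1
  exact (subset_insert _ _).trans (hpre.subset_connectedComponentIn (mem_insert _ _) hdisj)

end RightHalfPlane

section Support

variable {V : Type*} {G K : SimpleGraph V}

theorem disjoint_of_subsingleton_support_inter (h : (G.support ∩ K.support).Subsingleton) :
    Disjoint G K := by
  refine SimpleGraph.disjoint_left.2 fun u v hG hK => hG.ne ?_
  exact h ⟨hG.left_mem_support, hK.left_mem_support⟩ ⟨hG.right_mem_support, hK.right_mem_support⟩

theorem finite_support_of_finite_edgeSet (h : G.edgeSet.Finite) : G.support.Finite := by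
  classical
  refine (h.biUnion fun e _ => e.toFinset.finite_toSet).subset ?_
  rintro u ⟨v, huv⟩
  exact mem_biUnion (G.mem_edgeSet.2 huv) (by simp)

theorem reachable_of_induce_connected {S : Set V} (h : (G.induce S).Connected) {u v : V}
    (hu : u ∈ S) (hv : v ∈ S) : G.Reachable u v :=
  (h.preconnected ⟨u, hu⟩ ⟨v, hv⟩).map (SimpleGraph.Embedding.induce S).toHom

end Support

section Drawing

variable {V : Type*} {G K : SimpleGraph V} {pos : V → ℝ × ℝ} {a v : V}

theorem IsGeomDrawing.mono (hKG : K ≤ G) (h : IsGeomDrawing G pos) : IsGeomDrawing K pos :=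
  ⟨h.1, fun u v huv => h.2.1 u v (hKG huv),
    fun u v x y huv hxy => h.2.2 u v x y (hKG huv) (hKG hxy)⟩

theorem IsGeom1Planar.mono (hKG : K ≤ G) (h : IsGeom1Planar G pos) : IsGeom1Planar K pos :=
  ⟨h.1.mono hKG, fun u v huv => (h.2 u v (hKG huv)).anti fun _ he =>
    ⟨SimpleGraph.edgeSet_mono hKG he.1, he.2⟩⟩

theorem drawnSet_subset_of_convex {C : Set (ℝ × ℝ)} (hC : Convex ℝ C)
    (h : ∀ u ∈ G.support, pos u ∈ C) : drawnSet G pos ⊆ C := by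
  rintro p ⟨u, v, huv, hp⟩
  exact hC.segment_subset (h u huv.left_mem_support) (h v huv.right_mem_support) hp

theorem IsGeomDrawing.mem_support_of_mem_drawnSet (h : IsGeomDrawing G pos)
    (hv : pos v ∈ drawnSet G pos) : v ∈ G.support := by
  obtain ⟨x, y, hxy, hvxy⟩ := hv
  obtain rfl | rfl := h.2.1 x y hxy v hvxy
  exacts [hxy.left_mem_support, hxy.right_mem_support]

theorem IsGeomDrawing.notMem_openSegment (h : IsGeomDrawing G pos) {x y : V} (hxy : G.Adj x y) :
    pos v ∉ openSegment ℝ (pos x) (pos y) := by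
  have hne : pos x ≠ pos y := h.1.ne hxy.ne
  intro hv
  obtain rfl | rfl := h.2.1 x y hxy v (openSegment_subset_segment ℝ _ _ hv)
  exacts [hne (left_mem_openSegment_iff.1 hv), hne (right_mem_openSegment_iff.1 hv)]

theorem outerVertexRegion_of_rightmost (h : drawnSet G pos ⊆ Iic (pos a).1 ×ˢ univ) :
    OuterVertexRegion G pos a := by
  have hlt : (pos a).1 < (pos a).1 + 1 := lt_add_one _
  have hx : ((pos a).1 + 1, (0 : ℝ)) ∉ drawnSet G pos := fun hx => (h hx).1.not_gt hlt
  have hsub := rightHalfPlane_subset_connectedComponentIn h hx hlt.le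
  exact ⟨_, hx, not_isBounded_of_rightHalfPlane_subset hsub,
    closure_mono hsub (mem_closure_rightHalfPlane le_rfl)⟩

theorem IsGeomDrawing.mem_closure_connectedComponentIn_of_reachable (h : IsGeomDrawing G pos)
    {D : Set (ℝ × ℝ)} (hD : drawnSet G pos ∩ D ⊆ {pos a}) {p : ℝ × ℝ} (hva : G.Reachable v a)
    (hv : pos v ∈ connectedComponentIn Dᶜ p) :
    pos a ∈ closure (connectedComponentIn Dᶜ p) := by
  obtain ⟨walk⟩ := hva
  induction walk with
  | nil => exact subset_closure hv
  | @cons u w a huw _ ih =>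
    obtain rfl | hua := eq_or_ne u a
    · exact subset_closure hv
    have ha : pos a ∉ openSegment ℝ (pos u) (pos w) := h.notMem_openSegment huw
    have hcompl : segment ℝ (pos u) (pos w) \ {pos a} ⊆ Dᶜ := fun q hq hqD =>
      hq.2 (hD ⟨⟨u, w, huw, hq.1⟩, hqD⟩)
    have hcomp : segment ℝ (pos u) (pos w) \ {pos a} ⊆ connectedComponentIn Dᶜ p := by
      rw [connectedComponentIn_eq hv]
      exact (isPreconnected_segment_sdiff_singleton ha).subset_connectedComponentIn
        ⟨left_mem_segment ℝ _ _, h.1.ne hua⟩ hcompl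
    obtain rfl | hwa := eq_or_ne w a
    · exact closure_mono hcomp
        (segment_subset_closure_segment_sdiff_singleton ha (right_mem_segment ℝ _ _))
    · exact ih hD (hcomp ⟨right_mem_segment ℝ _ _, h.1.ne hwa⟩)

end Drawing

section Crossing

variable {V : Type*} {G K : SimpleGraph V} {pos : V → ℝ × ℝ} {a v : V}

/-- Two graphs drawn with the same vertex positions cross if some edge of `G` properly crosses some
edge of `K`. -/
def GraphsCross (pos : V → ℝ × ℝ) (G K : SimpleGraph V) : Prop :=
  ∃ u v x y, G.Adj u v ∧ K.Adj x y ∧ SegCross pos u v x y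

theorem crossingEdges_swap (u v : V) : crossingEdges G pos v u = crossingEdges G pos u v := by
  simp only [crossingEdges, SegCross, segment_symm ℝ (pos v), openSegment_symm ℝ (pos v)]

theorem crossingEdges_congr {u v u' v' : V} (h : s(u, v) = s(u', v')) :
    crossingEdges G pos u v = crossingEdges G pos u' v' := by
  obtain ⟨rfl, rfl⟩ | ⟨rfl, rfl⟩ := Sym2.eq_iff.1 h
  exacts [rfl, crossingEdges_swap _ _]

theorem IsGeomDrawing.graphsCross_or_drawnSet_inter_subset (h : IsGeomDrawing (G ⊔ K) pos)
    (hGK : G.support ∩ K.support ⊆ {a}) :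
    GraphsCross pos G K ∨ drawnSet G pos ∩ drawnSet K pos ⊆ {pos a} := by
  refine or_iff_not_imp_left.2 fun hcross => ?_
  rintro q ⟨⟨u, v, huv, hq⟩, x, y, hxy, hq'⟩
  have hne : s(u, v) ≠ s(x, y) :=
    (SimpleGraph.disjoint_edgeSet.2
      (disjoint_of_subsingleton_support_inter (subsingleton_singleton.anti hGK))).ne_of_mem
      (G.mem_edgeSet.2 huv) (K.mem_edgeSet.2 hxy)
  obtain hmeet | hcr := h.2.2 u v x y (Or.inl huv) (Or.inr hxy) hne
  · obtain ⟨⟨z, hz, rfl⟩, z', hz', hzz'⟩ := hmeet ⟨hq, hq'⟩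
    obtain rfl := h.1 hzz'
    have hzG : z' ∈ G.support := by
      obtain rfl | rfl := hz
      exacts [huv.left_mem_support, huv.right_mem_support]
    have hzK : z' ∈ K.support := by
      obtain rfl | rfl := hz'
      exacts [hxy.left_mem_support, hxy.right_mem_support]
    exact congrArg pos (hGK ⟨hzG, hzK⟩)
  · exact absurd ⟨u, v, x, y, huv, hxy, hcr⟩ hcross

theorem IsGeomDrawing.graphsCross_or_outerVertexRegion (h : IsGeomDrawing (G ⊔ K) pos)
    (hGK : G.support ∩ K.support ⊆ {a}) (hva : G.Reachable v a) (hvK : v ∉ K.support)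
    (hright : drawnSet K pos ⊆ Iic (pos v).1 ×ˢ univ) :
    GraphsCross pos G K ∨ OuterVertexRegion K pos a := by
  refine (h.graphsCross_or_drawnSet_inter_subset hGK).imp_right fun hD => ?_
  have hv : pos v ∉ drawnSet K pos := fun hv =>
    hvK ((h.mono le_sup_right).mem_support_of_mem_drawnSet hv)
  exact ⟨pos v, hv,
    not_isBounded_of_rightHalfPlane_subset
      (rightHalfPlane_subset_connectedComponentIn hright hv le_rfl),
    (h.mono le_sup_left).mem_closure_connectedComponentIn_of_reachable hD hva
      (mem_connectedComponentIn hv)⟩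

theorem IsGeomDrawing.exists_forall_graphsCross {ι : Type*} [Finite ι] [Nonempty ι]
    {H : ι → SimpleGraph V} (h : IsGeomDrawing (⨆ i, H i) pos)
    (hdisj : Pairwise fun i j => (H i).support ∩ (H j).support ⊆ {a})
    (hreach : ∀ i, ∀ v ∈ (H i).support, (H i).Reachable v a)
    (hfin : ∀ i, (H i).edgeSet.Finite) (hnot : ∀ i, ¬ OuterVertexRegion (H i) pos a) :
    ∃ i, ∀ j ≠ i, GraphsCross pos (H i) (H j) := by
  have hverts : (insert a (⋃ i, (H i).support)).Finite :=
    (finite_iUnion fun i => finite_support_of_finite_edgeSet (hfin i)).insert a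
  obtain ⟨v, hv, hmax⟩ := exists_max_image _ (fun u => (pos u).1) hverts (insert_nonempty _ _)
  have hright (j : ι) : drawnSet (H j) pos ⊆ Iic (pos v).1 ×ˢ univ :=
    drawnSet_subset_of_convex ((convex_Iic _).prod convex_univ) fun u hu =>
      ⟨hmax u (mem_insert_of_mem a (mem_iUnion_of_mem j hu)), mem_univ _⟩
  have hva : v ≠ a := by
    rintro rfl
    exact hnot (Classical.arbitrary ι) (outerVertexRegion_of_rightmost (hright _))
  obtain ⟨i, hvi⟩ := mem_iUnion.1 (hv.resolve_left hva)
  refine ⟨i, fun j hji => ?_⟩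
  have hij : (H i).support ∩ (H j).support ⊆ {a} := hdisj hji.symm
  have hvj : v ∉ (H j).support := fun hvj => hva (hij ⟨hvi, hvj⟩)
  have hsup : IsGeomDrawing (H i ⊔ H j) pos := h.mono (sup_le (le_iSup H i) (le_iSup H j))
  exact (hsup.graphsCross_or_outerVertexRegion hij (hreach i v hvi) hvj
    (hright j)).resolve_right (hnot j)

theorem IsGeom1Planar.card_le_encard_edgeSet {ι : Type*} {M : SimpleGraph V}
    {H : ι → SimpleGraph V} (h : IsGeom1Planar M pos) (hG : G ≤ M) (hH : ∀ j, H j ≤ M)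
    (hdisj : Pairwise fun i j => Disjoint (H i) (H j)) (hcross : ∀ j, GraphsCross pos G (H j)) :
    ENat.card ι ≤ G.edgeSet.encard := by
  choose u v x y huv hxy hseg using hcross
  have hmem (j : ι) : s(x j, y j) ∈ crossingEdges M pos (u j) (v j) :=
    ⟨hH j (hxy j), x j, y j, rfl, hseg j⟩
  refine ENat.card_le_card_of_injective
    (f := fun j => (⟨s(u j, v j), huv j⟩ : G.edgeSet)) fun i j hij => ?_
  have hcongr := crossingEdges_congr (G := M) (pos := pos) (congrArg Subtype.val hij)
  have hedge : s(x i, y i) = s(x j, y j) :=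
    h.2 _ _ (hG (huv i)) (hmem i) (hcongr ▸ hmem j)
  refine hdisj.eq fun hd => ?_
  exact (SimpleGraph.disjoint_edgeSet.2 hd).ne_of_mem (hxy i) (hxy j) hedge

end Crossing

theorem stmt6_general {V ι : Type*} (m : ℕ) (H : ι → SimpleGraph V) (a : V)
    (hdisj : Pairwise fun i j => (H i).support ∩ (H j).support ⊆ {a})
    (hreach : ∀ i, ∀ v ∈ (H i).support, (H i).Reachable v a)
    (hnotouter : ∀ i, ¬ OuterGeomOnePlanar (H i) a)
    (hm : ∀ i, (H i).edgeSet.encard ≤ m)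
    (hk : m + 2 ≤ Nat.card ι) :
    ¬ GeomOnePlanar (⨆ i, H i) := by
  rintro ⟨pos, hpos⟩
  have : Finite ι := Nat.finite_of_card_ne_zero (by omega)
  have : Nonempty ι := Finite.card_pos_iff.1 (by omega)
  obtain ⟨i, hcross⟩ := hpos.1.exists_forall_graphsCross hdisj hreach
    (fun i => finite_of_encard_le_coe (hm i))
    fun i h => hnotouter i ⟨pos, hpos.mono (le_iSup H i), h⟩
  have hdisjoint (j j' : ι) (hjj' : j ≠ j') : Disjoint (H j) (H j') :=
    disjoint_of_subsingleton_support_inter (subsingleton_singleton.anti (hdisj hjj'))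
  have hcard : ({i}ᶜ : Set ι).encard ≤ m :=
    (hpos.card_le_encard_edgeSet (H := fun j : ({i}ᶜ : Set ι) => H j) (le_iSup H i)
      (fun j => le_iSup H j) (fun j j' hjj' => hdisjoint j j' (Subtype.coe_ne_coe.2 hjj'))
      fun j => hcross j j.2).trans (hm i)
  have hncard : ({i}ᶜ : Set ι).ncard ≤ m := (encard_le_coe_iff_finite_ncard_le.1 hcard).2
  have hsum : 1 + ({i}ᶜ : Set ι).ncard = Nat.card ι := by
    rw [← ncard_singleton i, ncard_add_ncard_compl]
  omega

/-- Let `G_1, …, G_k` (here `H i`, with vertex set `S i` inside a common ambient finite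
vertex type) be connected graphs with pairwise-disjoint vertex sets except that a
single vertex `a` belongs to every `G_i`.  Assume each `G_i` is not `a`-outer geometric
1-planar and has at most `m` edges.  If `k ≥ m + 2`, then `⋃ᵢ Gᵢ` is not geometric
1-planar. -/
theorem stmt6 {V : Type*} [Fintype V] (k m : ℕ) (H : Fin k → SimpleGraph V)
    (S : Fin k → Set V) (a : V)
    (hmem : ∀ i, a ∈ S i)
    (hdisj : ∀ i j, i ≠ j → S i ∩ S j ⊆ {a})
    (hedges : ∀ i, ∀ u v : V, (H i).Adj u v → u ∈ S i ∧ v ∈ S i)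
    (hconn : ∀ i, ((H i).induce (S i)).Connected)
    (hnotouter : ∀ i, ¬ OuterGeomOnePlanar (H i) a)
    (hm : ∀ i, (H i).edgeSet.ncard ≤ m)
    (hk : m + 2 ≤ k) :
    ¬ GeomOnePlanar (⨆ i, H i) := by
  have hsupp (i : Fin k) : (H i).support ⊆ S i := fun u ⟨v, huv⟩ => (hedges i u v huv).1
  exact stmt6_general m H a
    (fun i j hij => (inter_subset_inter (hsupp i) (hsupp j)).trans (hdisj i j hij))
    (fun i _ hv => reachable_of_induce_connected (hconn i) (hsupp i hv) (hmem i)) hnotouter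
    (fun i => encard_le_coe_iff_finite_ncard_le.2 ⟨toFinite _, hm i⟩) (by simpa using hk)
end
end

section
/- Let G be a finite simple graph whose edge set can be partitioned into f degree-2 paths, each of length at least f − 1. Then G is geometric 1-planar. -/
open Set

noncomputable section

/-!
Put the ends of the paths at generic points of the parabola `y = x ^ 2` and draw each path along the
chord between its ends. Only parallel paths, those with the same two ends, would overlap; apart from
that, any two chords cross at most once, no three are concurrent, and chords sharing an end do not
cross. Bending chords slightly near their left ends keeps all this and separates parallel paths. Of
`f` curves, each then has at most `f - 1` crossings, and a bent one, which shares an end with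
another curve, at most `f - 2`. So `f - 1` edges suffice to cut each curve into straight pieces with
at most one crossing each: `f - 2` breaks separate `f - 1` crossings, and a bent curve uses one of
them for its bend.
-/

/-! ## Lines and chords of the parabola -/

/-- The determinant with rows `(1, mₖ, dₖ)`, which vanishes if and only if the lines
`y = mₖ * x - dₖ` are concurrent or all parallel. -/
def lineDet {R : Type*} [CommRing R] (m₁ d₁ m₂ d₂ m₃ d₃ : R) : R :=
  (m₂ - m₁) * (d₃ - d₁) - (m₃ - m₁) * (d₂ - d₁)

theorem lineDet_eq_zero_of_concurrent {R : Type*} [CommRing R] {m₁ d₁ m₂ d₂ m₃ d₃ x : R}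
    (h₁₂ : m₁ * x - d₁ = m₂ * x - d₂) (h₁₃ : m₁ * x - d₁ = m₃ * x - d₃) :
    lineDet m₁ d₁ m₂ d₂ m₃ d₃ = 0 := by
  rw [lineDet]
  linear_combination (m₂ - m₁) * h₁₃ - (m₃ - m₁) * h₁₂

/-- General position of a set of abscissae: no three chords of the parabola `y = x ^ 2` with six
distinct ends over `T` lie on concurrent or on parallel lines. The chord over `a` and `b` lies on
the line `y = (a + b) * x - a * b`. -/
def ChordGeneric (T : Set ℝ) : Prop :=
  ∀ x : Fin 6 → ℝ, Function.Injective x → (∀ m, x m ∈ T) →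
    lineDet (x 0 + x 1) (x 0 * x 1) (x 2 + x 3) (x 2 * x 3) (x 4 + x 5) (x 4 * x 5) ≠ 0

theorem exists_forall_eval_ne_zero {R σ κ : Type*} [CommRing R] [IsDomain R] [Infinite R]
    [Finite κ] (Q : κ → MvPolynomial σ R) (hQ : ∀ k, Q k ≠ 0) :
    ∃ t : σ → R, ∀ k, MvPolynomial.eval t (Q k) ≠ 0 := by
  have := Fintype.ofFinite κ
  have hprod : ∏ k, Q k ≠ 0 := Finset.prod_ne_zero_iff.2 fun k _ => hQ k
  obtain ⟨t, ht⟩ : ∃ t, MvPolynomial.eval t (∏ k, Q k) ≠ 0 := by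
    by_contra! h
    exact hprod (MvPolynomial.funext fun t => by rw [h t, map_zero])
  rw [map_prod, Finset.prod_ne_zero_iff] at ht
  exact ⟨t, fun k => ht k (Finset.mem_univ k)⟩

theorem exists_injective_chordGeneric_range (V : Type*) [Finite V] :
    ∃ t : V → ℝ, Function.Injective t ∧ ChordGeneric (range t) := by
  let D : MvPolynomial (Fin 6) ℝ :=
    lineDet (.X 0 + .X 1) (.X 0 * .X 1) (.X 2 + .X 3) (.X 2 * .X 3) (.X 4 + .X 5) (.X 4 * .X 5)
  have eval_D (x : Fin 6 → ℝ) : MvPolynomial.eval x D =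
      lineDet (x 0 + x 1) (x 0 * x 1) (x 2 + x 3) (x 2 * x 3) (x 4 + x 5) (x 4 * x 5) := by
    simp [D, lineDet]
  have D_ne_zero : D ≠ 0 := fun h => by
    have h0 := eval_D fun k => if (k : ℕ) < 2 then 0 else if (k : ℕ) < 4 then 1 else 2
    rw [h, map_zero] at h0
    norm_num [lineDet] at h0
  obtain ⟨t, ht⟩ := exists_forall_eval_ne_zero
    (Sum.elim (fun σ : Fin 6 ↪ V => MvPolynomial.rename σ D)
      fun e : {e : V × V // e.1 ≠ e.2} => .X e.1.1 - .X e.1.2) (by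
    rintro (σ | ⟨e, he⟩)
    · exact (MvPolynomial.rename_eq_zero_iff_of_injective _ σ.injective).not.2 D_ne_zero
    · exact sub_ne_zero.2 (MvPolynomial.X_injective.ne he))
  refine ⟨t, fun v w hvw => ?_, fun x hx hxt => ?_⟩
  · by_contra hne
    exact ht (.inr ⟨(v, w), hne⟩) (by simp [hvw])
  · choose σ hσ using hxt
    obtain rfl : t ∘ σ = x := funext hσ
    have h := ht (.inl ⟨σ, hx.of_comp⟩)
    rwa [Sum.elim_inl, MvPolynomial.eval_rename, eval_D] at h

theorem sq_lt_chord {a b x : ℝ} (hax : a < x) (hxb : x < b) : x ^ 2 < (a + b) * x - a * b := by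
  nlinarith [mul_pos (sub_pos.2 hax) (sub_pos.2 hxb)]

/-! ## Affine pieces of a function -/

/-- `g` agrees with an affine function on `[p, q]`; the restrictions of `g` to such intervals are
the straight pieces of its graph. -/
def AffineOnIcc (g : ℝ → ℝ) (p q : ℝ) : Prop :=
  ∃ m d : ℝ, ∀ x ∈ Icc p q, g x = m * x + d

namespace AffineOnIcc

variable {g₁ g₂ g : ℝ → ℝ} {p q p' q' x y : ℝ}

theorem mono (h : AffineOnIcc g p q) (hp : p ≤ p') (hq : q' ≤ q) : AffineOnIcc g p' q' :=
  let ⟨m, d, hg⟩ := h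
  ⟨m, d, fun x hx => hg x ⟨hp.trans hx.1, hx.2.trans hq⟩⟩

theorem sub (h₁ : AffineOnIcc g₁ p q) (h₂ : AffineOnIcc g₂ p q) : AffineOnIcc (g₁ - g₂) p q := by
  obtain ⟨m₁, d₁, h₁⟩ := h₁
  obtain ⟨m₂, d₂, h₂⟩ := h₂
  refine ⟨m₁ - m₂, d₁ - d₂, fun x hx => ?_⟩
  rw [Pi.sub_apply, h₁ x hx, h₂ x hx]
  ring

theorem mul_sub_eq (h : AffineOnIcc g p q) (hx : x ∈ Icc p q) :
    (q - p) * g x = (q - x) * g p + (x - p) * g q := by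
  obtain ⟨m, d, hg⟩ := h
  have hpq := hx.1.trans hx.2
  rw [hg x hx, hg p (left_mem_Icc.2 hpq), hg q (right_mem_Icc.2 hpq)]
  ring

theorem lt_of_lt_of_le (h₁ : AffineOnIcc g₁ p q) (h₂ : AffineOnIcc g₂ p q) (hp : g₁ p < g₂ p)
    (hq : g₁ q ≤ g₂ q) (hx : x ∈ Ico p q) : g₁ x < g₂ x := by
  have key := (h₂.sub h₁).mul_sub_eq ⟨hx.1, hx.2.le⟩
  simp only [Pi.sub_apply] at key
  have hqp : 0 < q - p := sub_pos.2 (hx.1.trans_lt hx.2)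
  have := mul_pos (sub_pos.2 hx.2) (sub_pos.2 hp)
  have := mul_nonneg (sub_nonneg.2 hx.1) (sub_nonneg.2 hq)
  exact sub_pos.1 (pos_of_mul_pos_right (by linarith) hqp.le)

theorem lt_of_le_of_lt (h₁ : AffineOnIcc g₁ p q) (h₂ : AffineOnIcc g₂ p q) (hp : g₁ p ≤ g₂ p)
    (hq : g₁ q < g₂ q) (hx : x ∈ Ioc p q) : g₁ x < g₂ x := by
  have key := (h₂.sub h₁).mul_sub_eq ⟨hx.1.le, hx.2⟩
  simp only [Pi.sub_apply] at key
  have hqp : 0 < q - p := sub_pos.2 (hx.1.trans_le hx.2)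
  have := mul_nonneg (sub_nonneg.2 hx.2) (sub_nonneg.2 hp)
  have := mul_pos (sub_pos.2 hx.1) (sub_pos.2 hq)
  exact sub_pos.1 (pos_of_mul_pos_right (by linarith) hqp.le)

theorem eq_of_eq_of_eq (h₁ : AffineOnIcc g₁ p q) (h₂ : AffineOnIcc g₂ p q) (hp : g₁ p ≠ g₂ p)
    (hx : x ∈ Icc p q) (hy : y ∈ Icc p q) (hgx : g₁ x = g₂ x) (hgy : g₁ y = g₂ y) : x = y := by
  wlog hxy : x < y generalizing x y
  · rcases (not_lt.1 hxy).eq_or_lt with h | h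
    · exact h.symm
    · exact (this hy hx hgy hgx h).symm
  have key := ((h₁.sub h₂).mono le_rfl hy.2).mul_sub_eq ⟨hx.1, hxy.le⟩
  simp only [Pi.sub_apply, hgx, hgy, sub_self, mul_zero, add_zero] at key
  exact absurd key.symm (mul_ne_zero (sub_ne_zero.2 hxy.ne') (sub_ne_zero.2 hp))

theorem exists_affineMap (h : AffineOnIcc g p q) :
    ∃ F : ℝ →ᵃ[ℝ] ℝ × ℝ, ∀ x ∈ Icc p q, F x = (x, g x) := by
  obtain ⟨m, d, hg⟩ := h
  refine ⟨(AffineMap.id ℝ ℝ).prod (m • AffineMap.id ℝ ℝ + AffineMap.const ℝ ℝ d), fun x hx => ?_⟩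
  simp [hg x hx]

theorem segment_eq_graphOn (h : AffineOnIcc g p q) (hpq : p < q) :
    segment ℝ (p, g p) (q, g q) = (Icc p q).graphOn g := by
  obtain ⟨F, hF⟩ := h.exists_affineMap
  rw [← hF p (left_mem_Icc.2 hpq.le), ← hF q (right_mem_Icc.2 hpq.le), ← image_segment,
    segment_eq_Icc hpq.le]
  exact image_congr hF

theorem openSegment_eq_graphOn (h : AffineOnIcc g p q) (hpq : p < q) :
    openSegment ℝ (p, g p) (q, g q) = (Ioo p q).graphOn g := by
  obtain ⟨F, hF⟩ := h.exists_affineMap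
  rw [← hF p (left_mem_Icc.2 hpq.le), ← hF q (right_mem_Icc.2 hpq.le), ← image_openSegment,
    openSegment_eq_Ioo hpq]
  exact image_congr fun x hx => hF x (Ioo_subset_Icc_self hx)

end AffineOnIcc

/-! ## Arrangements of graphs of functions -/

/-- The graphs of two different members `g i` and `g j` of a family, drawn over the open intervals
`(a i, b i)` and `(a j, b j)`, meet over `x`. -/
def CrossAt {ι : Type*} (a b : ι → ℝ) (g : ι → ℝ → ℝ) (i j : ι) (x : ℝ) : Prop :=
  i ≠ j ∧ x ∈ Ioo (a i) (b i) ∧ x ∈ Ioo (a j) (b j) ∧ g i x = g j x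

theorem CrossAt.symm {ι : Type*} {a b : ι → ℝ} {g : ι → ℝ → ℝ} {i j : ι} {x : ℝ}
    (h : CrossAt a b g i j x) : CrossAt a b g j i x :=
  ⟨h.1.symm, h.2.2.1, h.2.1, h.2.2.2.symm⟩

/-- The abscissae of all crossings on the `i`-th curve of a family. -/
def crossings {ι : Type*} (a b : ι → ℝ) (g : ι → ℝ → ℝ) (i : ι) : Set ℝ :=
  {x | ∃ j, CrossAt a b g i j x}

/-- A family of curves `y = g i x`, `a i ≤ x ≤ b i`, in which two curves cross at most once, no
three curves have a common crossing, and crossing curves differ in both end abscissae. -/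
structure IsArrangement {ι : Type*} (a b : ι → ℝ) (g : ι → ℝ → ℝ) : Prop where
  left_lt_right : ∀ i, a i < b i
  left_ne : ∀ {i j x}, CrossAt a b g i j x → a i ≠ a j
  right_ne : ∀ {i j x}, CrossAt a b g i j x → b i ≠ b j
  eq_of_crossAt : ∀ {i j x y}, CrossAt a b g i j x → CrossAt a b g i j y → x = y
  eq_of_common_crossing : ∀ {i j k x}, CrossAt a b g i j x → CrossAt a b g i k x → j = k

theorem IsArrangement.exists_finset_eq_crossings {ι : Type*} {a b : ι → ℝ} {g : ι → ℝ → ℝ}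
    (h : IsArrangement a b g) {i : ι} {S : Finset ι} (hS : ∀ j x, CrossAt a b g i j x → j ∈ S) :
    ∃ C : Finset ℝ, (C : Set ℝ) = crossings a b g i ∧ C.card ≤ S.card := by
  classical
  have crossing_unique (j : ι) : ∃ y, ∀ x, CrossAt a b g i j x → x = y := by
    by_cases hj : ∃ y, CrossAt a b g i j y
    · exact hj.imp fun y hy x hx => h.eq_of_crossAt hx hy
    · exact ⟨0, fun x hx => absurd ⟨x, hx⟩ hj⟩
  choose y hy using crossing_unique
  refine ⟨(S.image y).filter (· ∈ crossings a b g i), ?_,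
    (Finset.card_filter_le _ _).trans Finset.card_image_le⟩
  ext x
  simp only [Finset.coe_filter, Finset.mem_image, mem_ofPred_eq, and_iff_right_iff_imp]
  rintro ⟨j, hj⟩
  exact ⟨j, hS j x hj, (hy j x hj).symm⟩

/-! ## Bent chords -/

/-- The tent over `[a, b]` with apex over `a + η` and slope `-1` to the right of the apex. -/
def tent (η a b x : ℝ) : ℝ :=
  min ((b - a - η) / η * (x - a)) (b - x)

/-- The chord of the parabola over `[a, b]`, bent over `a + η`: its ends are kept, and its right
part is rotated about the right end so that its slope decreases by `s`. -/
def bentChord (η s a b x : ℝ) : ℝ :=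
  (a + b) * x - a * b + s * tent η a b x

/-- The family of bent chords over `[a i, b i]` with bending parameters `s i`. -/
abbrev bentChords {ι : Type*} (η : ℝ) (s a b : ι → ℝ) (i : ι) : ℝ → ℝ :=
  bentChord η (s i) (a i) (b i)

section BentChord

variable {η s a b x : ℝ}

theorem tent_eq_left (hη : 0 < η) (hab : a ≤ b) (hx : x ≤ a + η) :
    tent η a b x = (b - a - η) / η * (x - a) := by
  refine min_eq_left ?_
  rw [div_mul_eq_mul_div, div_le_iff₀ hη]
  nlinarith [mul_nonneg (sub_nonneg.2 hab) (sub_nonneg.2 hx)]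

theorem tent_eq_right (hη : 0 < η) (hab : a ≤ b) (hx : a + η ≤ x) : tent η a b x = b - x := by
  refine min_eq_right ?_
  rw [div_mul_eq_mul_div, le_div_iff₀ hη]
  nlinarith [mul_nonneg (sub_nonneg.2 hab) (sub_nonneg.2 hx)]

theorem tent_pos (hη : 0 < η) (hb : a + η < b) (hx : x ∈ Ioo a b) : 0 < tent η a b x :=
  lt_min (mul_pos (div_pos (by linarith) hη) (sub_pos.2 hx.1)) (sub_pos.2 hx.2)

theorem bentChord_left (hab : a ≤ b) : bentChord η s a b a = a ^ 2 := by
  rw [bentChord, tent, sub_self, mul_zero, min_eq_left (sub_nonneg.2 hab)]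
  ring

theorem bentChord_right (hη : 0 < η) (hb : a + η ≤ b) : bentChord η s a b b = b ^ 2 := by
  rw [bentChord, tent_eq_right hη (by linarith) hb]
  ring

theorem bentChord_eq_line (hη : 0 < η) (hab : a ≤ b) (hx : a + η ≤ x) :
    bentChord η s a b x = (a + b - s) * x - (a * b - s * b) := by
  rw [bentChord, tent_eq_right hη hab hx]
  ring

theorem affineOnIcc_bentChord_left (hη : 0 < η) (hab : a ≤ b) :
    AffineOnIcc (bentChord η s a b) a (a + η) := by
  refine ⟨a + b + s * ((b - a - η) / η), -(a * b) - s * ((b - a - η) / η) * a, fun x hx => ?_⟩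
  rw [bentChord, tent_eq_left hη hab hx.2]
  ring

theorem affineOnIcc_bentChord_right (hη : 0 < η) (hab : a ≤ b) :
    AffineOnIcc (bentChord η s a b) (a + η) b :=
  ⟨a + b - s, -(a * b - s * b), fun x hx => by
    rw [bentChord_eq_line hη hab hx.1, sub_eq_add_neg]⟩

theorem affineOnIcc_bentChord_zero : AffineOnIcc (bentChord η 0 a b) a b :=
  ⟨a + b, -(a * b), fun x _ => by rw [bentChord]; ring⟩

end BentChord

/-- Chords of the parabola over `[a i, b i]` with ends over `T` are bent so slightly that strict
inequalities and general position survive, while chords with the same ends are separated. -/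
structure IsSmallBend {ι : Type*} (T : Set ℝ) (a b s : ι → ℝ) (η : ℝ) : Prop where
  left_mem : ∀ i, a i ∈ T
  right_mem : ∀ i, b i ∈ T
  left_lt_right : ∀ i, a i < b i
  width_pos : 0 < η
  add_width_lt : ∀ w ∈ T, ∀ z ∈ T, w < z → w + η < z
  ne_of_same_ends : ∀ i j, i ≠ j → a i = a j → b i = b j → s i ≠ s j
  sq_lt : ∀ i, ∀ w ∈ T, w ∈ Ioo (a i) (b i) → w ^ 2 < bentChords η s a b i w
  apex_lt_of_left_lt : ∀ i j, a i < a j → a j < b i →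
    bentChords η s a b j (a j + η) < bentChords η s a b i (a j + η)
  apex_lt_of_right_lt : ∀ i j, a i = a j → b i < b j →
    bentChords η s a b i (a i + η) < bentChords η s a b j (a i + η)
  lineDet_ne_zero : ∀ i j k, Function.Injective ![a i, b i, a j, b j, a k, b k] →
    lineDet (a i + b i - s i) (a i * b i - s i * b i) (a j + b j - s j) (a j * b j - s j * b j)
      (a k + b k - s k) (a k * b k - s k * b k) ≠ 0

section ExistsSmallBend

open Filter Topology

variable {ι : Type*} [Finite ι] {T : Set ℝ} {a b : ι → ℝ}

theorem eventually_add_lt (hT : T.Finite) :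
    ∀ᶠ η in 𝓝 (0 : ℝ), ∀ w ∈ T, ∀ z ∈ T, w < z → w + η < z := by
  refine (eventually_all_finite hT).2 fun w _ => (eventually_all_finite hT).2 fun z _ =>
    eventually_imp_distrib_left.2 fun hwz => ?_
  exact ContinuousAt.eventually_lt (by fun_prop) (by fun_prop) (by simpa using hwz)

theorem eventually_chord_lt_chord :
    ∀ᶠ η in 𝓝 (0 : ℝ), ∀ i j, a i < a j → a j < b i →
      (a j + b j) * (a j + η) - a j * b j < (a i + b i) * (a j + η) - a i * b i := by
  refine eventually_all.2 fun i => eventually_all.2 fun j =>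
    eventually_imp_distrib_left.2 fun hij => eventually_imp_distrib_left.2 fun hji => ?_
  refine ContinuousAt.eventually_lt (by fun_prop) (by fun_prop) ?_
  linarith [sq_lt_chord hij hji]

theorem eventually_bentChord_lt_bentChord {η c c' a b a' b' x : ℝ}
    (h : (a + b) * x - a * b < (a' + b') * x - a' * b') :
    ∀ᶠ e in 𝓝 (0 : ℝ), bentChord η (e * c) a b x < bentChord η (e * c') a' b' x := by
  simp only [bentChord]
  exact ContinuousAt.eventually_lt (by fun_prop) (by fun_prop) (by simpa using h)

theorem eventually_lt_bentChord {η c a b x y : ℝ} (h : y < (a + b) * x - a * b) :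
    ∀ᶠ e in 𝓝 (0 : ℝ), y < bentChord η (e * c) a b x := by
  simp only [bentChord]
  exact ContinuousAt.eventually_lt (by fun_prop) (by fun_prop) (by simpa using h)

theorem ChordGeneric.eventually_lineDet_ne_zero (hT : ChordGeneric T) (c : ι → ℝ)
    (ha : ∀ i, a i ∈ T) (hb : ∀ i, b i ∈ T) :
    ∀ᶠ e in 𝓝 (0 : ℝ), ∀ i j k, Function.Injective ![a i, b i, a j, b j, a k, b k] →
      lineDet (a i + b i - e * c i) (a i * b i - e * c i * b i)
        (a j + b j - e * c j) (a j * b j - e * c j * b j)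
        (a k + b k - e * c k) (a k * b k - e * c k * b k) ≠ 0 := by
  refine eventually_all.2 fun i => eventually_all.2 fun j => eventually_all.2 fun k =>
    eventually_imp_distrib_left.2 fun hinj => ?_
  unfold lineDet
  refine ContinuousAt.eventually_ne (by fun_prop) ?_
  have := hT _ hinj (by simp [Fin.forall_fin_succ, ha, hb])
  simpa [lineDet] using this

theorem exists_isSmallBend (hT : T.Finite) (hgen : ChordGeneric T) (ha : ∀ i, a i ∈ T)
    (hb : ∀ i, b i ∈ T) (hab : ∀ i, a i < b i) {c : ι → ℝ}
    (hc : ∀ i j, i ≠ j → a i = a j → b i = b j → c i ≠ c j) :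
    ∃ η s, IsSmallBend T a b s η ∧ ∀ i, c i = 0 → s i = 0 := by
  obtain ⟨η, ⟨hgap, hchord⟩, hη⟩ := (((eventually_add_lt hT).and
    (eventually_chord_lt_chord (a := a) (b := b))).filter_mono nhdsWithin_le_nhds
      |>.and (self_mem_nhdsWithin (s := Ioi (0 : ℝ)))).exists
  have sq_lt : ∀ᶠ e in 𝓝 (0 : ℝ), ∀ i, ∀ w ∈ T, w ∈ Ioo (a i) (b i) →
      w ^ 2 < bentChord η (e * c i) (a i) (b i) w :=
    eventually_all.2 fun i => (eventually_all_finite hT).2 fun w _ =>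
      eventually_imp_distrib_left.2 fun hw => eventually_lt_bentChord (sq_lt_chord hw.1 hw.2)
  have apex_left : ∀ᶠ e in 𝓝 (0 : ℝ), ∀ i j, a i < a j → a j < b i →
      bentChord η (e * c j) (a j) (b j) (a j + η) < bentChord η (e * c i) (a i) (b i) (a j + η) :=
    eventually_all.2 fun i => eventually_all.2 fun j =>
      eventually_imp_distrib_left.2 fun hij => eventually_imp_distrib_left.2 fun hji =>
        eventually_bentChord_lt_bentChord (hchord i j hij hji)
  have apex_right : ∀ᶠ e in 𝓝 (0 : ℝ), ∀ i j, a i = a j → b i < b j →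
      bentChord η (e * c i) (a i) (b i) (a i + η) < bentChord η (e * c j) (a j) (b j) (a i + η) :=
    eventually_all.2 fun i => eventually_all.2 fun j => eventually_imp_distrib_left.2 fun hij =>
      eventually_imp_distrib_left.2 fun hbb => eventually_bentChord_lt_bentChord (by
        rw [← hij]
        nlinarith [mul_pos (sub_pos.2 hbb) hη])
  obtain ⟨e, ⟨hsq, hleft, hright, hdet⟩, he⟩ := ((sq_lt.and (apex_left.and (apex_right.and
    (hgen.eventually_lineDet_ne_zero c ha hb)))).filter_mono nhdsWithin_le_nhds
      |>.and (self_mem_nhdsWithin (s := {(0 : ℝ)}ᶜ))).exists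
  exact ⟨η, fun i => e * c i, ⟨ha, hb, hab, hη, hgap,
    fun i j hij hl hr => (mul_right_injective₀ he).ne (hc i j hij hl hr),
    hsq, hleft, hright, hdet⟩, fun i hi => by simp [hi]⟩

end ExistsSmallBend

namespace IsSmallBend

variable {ι : Type*} {T : Set ℝ} {a b s : ι → ℝ} {η : ℝ} {i j k : ι} {x y : ℝ}

theorem left_add_lt_right (h : IsSmallBend T a b s η) (i : ι) : a i + η < b i :=
  h.add_width_lt _ (h.left_mem i) _ (h.right_mem i) (h.left_lt_right i)

theorem curve_left (h : IsSmallBend T a b s η) (i : ι) : bentChords η s a b i (a i) = a i ^ 2 :=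
  bentChord_left (h.left_lt_right i).le

theorem curve_right (h : IsSmallBend T a b s η) (i : ι) : bentChords η s a b i (b i) = b i ^ 2 :=
  bentChord_right h.width_pos (h.left_add_lt_right i).le

theorem affineOnIcc_left (h : IsSmallBend T a b s η) (i : ι) :
    AffineOnIcc (bentChords η s a b i) (a i) (a i + η) :=
  affineOnIcc_bentChord_left h.width_pos (h.left_lt_right i).le

theorem affineOnIcc_right (h : IsSmallBend T a b s η) (i : ι) :
    AffineOnIcc (bentChords η s a b i) (a i + η) (b i) :=
  affineOnIcc_bentChord_right h.width_pos (h.left_lt_right i).le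

theorem lt_until_apex (h : IsSmallBend T a b s η) (hij : a i < a j) (hji : a j < b i)
    (hx : x ∈ Icc (a j) (a j + η)) : bentChords η s a b j x < bentChords η s a b i x := by
  have hi : AffineOnIcc (bentChords η s a b i) (a j) (a j + η) :=
    (h.affineOnIcc_right i).mono (h.add_width_lt _ (h.left_mem i) _ (h.left_mem j) hij).le
      (h.add_width_lt _ (h.left_mem j) _ (h.right_mem i) hji).le
  have hleft : bentChords η s a b j (a j) < bentChords η s a b i (a j) := by
    rw [h.curve_left j]
    exact h.sq_lt i _ (h.left_mem j) ⟨hij, hji⟩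
  have hapex := h.apex_lt_of_left_lt i j hij hji
  rcases hx.2.eq_or_lt with rfl | hlt
  · exact hapex
  · exact (h.affineOnIcc_left j).lt_of_lt_of_le hi hleft hapex.le ⟨hx.1, hlt⟩

theorem lt_of_left_lt_of_right_eq (h : IsSmallBend T a b s η) (hij : a i < a j) (hb : b i = b j)
    (hx : x ∈ Ioo (a j) (b j)) : bentChords η s a b j x < bentChords η s a b i x := by
  have hji : a j < b i := hb ▸ h.left_lt_right j
  rcases le_total x (a j + η) with hle | hge
  · exact h.lt_until_apex hij hji ⟨hx.1.le, hle⟩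
  · have hi : AffineOnIcc (bentChords η s a b i) (a j + η) (b j) :=
      (h.affineOnIcc_right i).mono (by linarith) hb.ge
    have hright : bentChords η s a b j (b j) = bentChords η s a b i (b j) := by
      rw [h.curve_right j, ← hb, h.curve_right i]
    exact (h.affineOnIcc_right j).lt_of_lt_of_le hi (h.apex_lt_of_left_lt i j hij hji) hright.le
      ⟨hge, hx.2⟩

theorem lt_of_left_eq_of_right_lt (h : IsSmallBend T a b s η) (ha : a i = a j) (hb : b i < b j)
    (hx : x ∈ Ioo (a i) (b i)) : bentChords η s a b i x < bentChords η s a b j x := by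
  have hapex := h.apex_lt_of_right_lt i j ha hb
  rcases le_total x (a i + η) with hle | hge
  · have hj : AffineOnIcc (bentChords η s a b j) (a i) (a i + η) := ha ▸ h.affineOnIcc_left j
    have hleft : bentChords η s a b i (a i) = bentChords η s a b j (a i) := by
      rw [h.curve_left i, ha, h.curve_left j]
    exact (h.affineOnIcc_left i).lt_of_le_of_lt hj hleft.le hapex ⟨hx.1, hle⟩
  · have hj : AffineOnIcc (bentChords η s a b j) (a i + η) (b i) :=
      (h.affineOnIcc_right j).mono (by rw [ha]) hb.le
    have hright : bentChords η s a b i (b i) < bentChords η s a b j (b i) := by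
      rw [h.curve_right i]
      exact h.sq_lt j _ (h.right_mem i) ⟨ha ▸ h.left_lt_right i, hb⟩
    exact (h.affineOnIcc_right i).lt_of_lt_of_le hj hapex hright.le ⟨hge, hx.2⟩

theorem ne_of_left_eq_of_right_eq (h : IsSmallBend T a b s η) (hij : i ≠ j) (ha : a i = a j)
    (hb : b i = b j) (hx : x ∈ Ioo (a i) (b i)) :
    bentChords η s a b i x ≠ bentChords η s a b j x := by
  simp only [bentChords, bentChord, ← ha, ← hb, Ne, add_right_inj]
  exact (mul_left_injective₀ (tent_pos h.width_pos (h.left_add_lt_right i) hx).ne').ne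
    (h.ne_of_same_ends i j hij ha hb)

theorem left_ne_of_crossAt (h : IsSmallBend T a b s η)
    (hx : CrossAt a b (bentChords η s a b) i j x) : a i ≠ a j := by
  obtain ⟨hij, hxi, hxj, heq⟩ := hx
  intro ha
  rcases lt_trichotomy (b i) (b j) with hb | hb | hb
  · exact (h.lt_of_left_eq_of_right_lt ha hb hxi).ne heq
  · exact h.ne_of_left_eq_of_right_eq hij ha hb hxi heq
  · exact (h.lt_of_left_eq_of_right_lt ha.symm hb hxj).ne' heq

theorem right_ne_of_crossAt (h : IsSmallBend T a b s η)
    (hx : CrossAt a b (bentChords η s a b) i j x) : b i ≠ b j := by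
  obtain ⟨-, hxi, hxj, heq⟩ := id hx
  intro hb
  rcases (h.left_ne_of_crossAt hx).lt_or_gt with ha | ha
  · exact (h.lt_of_left_lt_of_right_eq ha hb hxj).ne' heq
  · exact (h.lt_of_left_lt_of_right_eq ha hb.symm hxi).ne heq

theorem apex_lt_of_crossAt (h : IsSmallBend T a b s η)
    (hx : CrossAt a b (bentChords η s a b) i j x) : a i + η < x := by
  obtain ⟨-, hxi, hxj, heq⟩ := id hx
  rcases (h.left_ne_of_crossAt hx).lt_or_gt with ha | ha
  · exact (h.add_width_lt _ (h.left_mem i) _ (h.left_mem j) ha).trans hxj.1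
  · by_contra! hle
    exact (h.lt_until_apex ha (hxi.1.trans hxj.2) ⟨hxi.1.le, hle⟩).ne heq

theorem eq_of_crossAt (h : IsSmallBend T a b s η)
    (hx : CrossAt a b (bentChords η s a b) i j x)
    (hy : CrossAt a b (bentChords η s a b) i j y) : x = y := by
  wlog ha : a i < a j generalizing i j
  · exact this hx.symm hy.symm ((h.left_ne_of_crossAt hx).lt_or_gt.resolve_left ha)
  have hi : AffineOnIcc (bentChords η s a b i) (a j + η) (min (b i) (b j)) :=
    (h.affineOnIcc_right i).mono (by linarith) (min_le_left _ _)
  have hj : AffineOnIcc (bentChords η s a b j) (a j + η) (min (b i) (b j)) :=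
    (h.affineOnIcc_right j).mono le_rfl (min_le_right _ _)
  have hapex := h.apex_lt_of_left_lt i j ha (hx.2.2.1.1.trans hx.2.1.2)
  have mem {z : ℝ} (hz : CrossAt a b (bentChords η s a b) i j z) :
      z ∈ Icc (a j + η) (min (b i) (b j)) :=
    ⟨(h.apex_lt_of_crossAt hz.symm).le, le_min hz.2.1.2.le hz.2.2.1.2.le⟩
  exact hi.eq_of_eq_of_eq hj hapex.ne' (mem hx) (mem hy) hx.2.2.2 hy.2.2.2

theorem eq_line_of_crossAt (h : IsSmallBend T a b s η)
    (hx : CrossAt a b (bentChords η s a b) i j x) :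
    bentChords η s a b i x = (a i + b i - s i) * x - (a i * b i - s i * b i) :=
  bentChord_eq_line h.width_pos (h.left_lt_right i).le (h.apex_lt_of_crossAt hx).le

theorem eq_of_common_crossing (h : IsSmallBend T a b s η)
    (hij : CrossAt a b (bentChords η s a b) i j x)
    (hik : CrossAt a b (bentChords η s a b) i k x) : j = k := by
  by_contra hne
  have hjk : CrossAt a b (bentChords η s a b) j k x :=
    ⟨hne, hij.2.2.1, hik.2.2.1, hij.2.2.2.symm.trans hik.2.2.2⟩
  have ends_ne {m n : ι} (hmn : CrossAt a b (bentChords η s a b) m n x) :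
      a m ≠ a n ∧ a m ≠ b n ∧ b m ≠ a n ∧ b m ≠ b n :=
    ⟨h.left_ne_of_crossAt hmn, (hmn.2.1.1.trans hmn.2.2.1.2).ne,
      (hmn.2.2.1.1.trans hmn.2.1.2).ne', h.right_ne_of_crossAt hmn⟩
  have hnodup : [a i, b i, a j, b j, a k, b k].Nodup := by
    simp [ends_ne hij, ends_ne hik, ends_ne hjk, (h.left_lt_right _).ne]
  refine h.lineDet_ne_zero i j k (List.nodup_ofFn.1 (by simpa using hnodup))
    (lineDet_eq_zero_of_concurrent (x := x) ?_ ?_)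
  · rw [← h.eq_line_of_crossAt hij, ← h.eq_line_of_crossAt hij.symm, hij.2.2.2]
  · rw [← h.eq_line_of_crossAt hik, ← h.eq_line_of_crossAt hik.symm, hik.2.2.2]

theorem isArrangement (h : IsSmallBend T a b s η) : IsArrangement a b (bentChords η s a b) where
  left_lt_right := h.left_lt_right
  left_ne := h.left_ne_of_crossAt
  right_ne := h.right_ne_of_crossAt
  eq_of_crossAt := h.eq_of_crossAt
  eq_of_common_crossing := h.eq_of_common_crossing

end IsSmallBend

/-! ## Cutting curves into pieces -/

/-- The points `X 0 < X 1 < ⋯ < X n` cut `[a, b]` into `n` pieces, none of them at a point of `C`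
and such that no piece contains two points of `C`. The terms of `X` beyond `n` play no role; they
are only there to let `X` be strictly monotone on all of `ℕ`. -/
structure IsCut (X : ℕ → ℝ) (n : ℕ) (C : Set ℝ) (a b : ℝ) : Prop where
  strictMono : StrictMono X
  zero : X 0 = a
  last : X n = b
  notMem : ∀ k ≤ n, X k ∉ C
  subsingleton : ∀ k < n, (Ioo (X k) (X (k + 1)) ∩ C).Subsingleton

namespace IsCut

variable {X : ℕ → ℝ} {n k l : ℕ} {C : Set ℝ} {a b m x : ℝ}

theorem mem_Icc (h : IsCut X n C a b) (hk : k ≤ n) : X k ∈ Icc a b :=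
  ⟨h.zero ▸ h.strictMono.monotone k.zero_le, h.last ▸ h.strictMono.monotone hk⟩

theorem Icc_subset (h : IsCut X n C a b) (hk : k < n) : Icc (X k) (X (k + 1)) ⊆ Icc a b :=
  Icc_subset_Icc (h.mem_Icc hk.le).1 (h.mem_Icc hk).2

theorem mem_Ioo_of_mem (h : IsCut X n C a b) (hk : k < n) (hx : x ∈ C)
    (hxk : x ∈ Icc (X k) (X (k + 1))) : x ∈ Ioo (X k) (X (k + 1)) :=
  ⟨hxk.1.lt_of_ne fun he => h.notMem k hk.le (he ▸ hx),
    hxk.2.lt_of_ne fun he => h.notMem (k + 1) hk (he ▸ hx)⟩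

theorem cons (h : IsCut X n (C ∩ Ioi m) m b) (ham : a < m) (ha : a ∉ C) (hm : m ∉ C)
    (hC : (C ∩ Iio m).Subsingleton) :
    IsCut (fun k => Nat.casesOn k a X) (n + 1) C a b where
  strictMono := strictMono_nat_of_lt_succ fun
    | 0 => ham.trans_eq h.zero.symm
    | k + 1 => h.strictMono k.lt_succ_self
  zero := rfl
  last := h.last
  notMem := fun
    | 0, _ => ha
    | k + 1, hk => fun hmem => by
      have hk : k ≤ n := Nat.le_of_succ_le_succ hk
      rcases (h.mem_Icc hk).1.eq_or_lt with he | hlt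
      · exact hm (he ▸ hmem)
      · exact h.notMem k hk ⟨hmem, hlt⟩
  subsingleton := fun
    | 0, _ => hC.anti fun x hx => ⟨hx.2, hx.1.2.trans_eq h.zero⟩
    | k + 1, hk => (h.subsingleton k (Nat.lt_of_succ_lt_succ hk)).anti fun x hx =>
      ⟨hx.1, hx.2, (h.mem_Icc (Nat.lt_of_succ_lt_succ hk).le).1.trans_lt hx.1.1⟩

theorem singleton (b : ℝ) : IsCut (fun k => b + k) 0 (C ∩ Ioi b) b b where
  strictMono := strictMono_id.const_add b |>.comp Nat.strictMono_cast
  zero := by simp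
  last := by simp
  notMem := by simp
  subsingleton := by simp

end IsCut

open Filter Topology in
theorem exists_separating_first {C : Finset ℝ} {a b : ℝ} (hab : a < b)
    (hC : (C : Set ℝ) ⊆ Ioo a b) :
    ∃ m ∈ Ioo a b, m ∉ C ∧ ((C : Set ℝ) ∩ Iio m).Subsingleton ∧
      (C.filter (m < ·)).card ≤ C.card - 1 := by
  rcases C.eq_empty_or_nonempty with rfl | hne
  · obtain ⟨m, hm⟩ := exists_between hab
    exact ⟨m, hm, by simp⟩
  set p := C.min' hne
  have hp : p ∈ C := C.min'_mem hne
  have hpm : ∀ᶠ m in 𝓝[>] p, ∀ x ∈ C, p < x → m < x :=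
    (eventually_all_finset C).2 fun x _ => eventually_imp_distrib_left.2 fun hx =>
      nhdsWithin_le_nhds (eventually_lt_nhds hx)
  have hpb : ∀ᶠ m in 𝓝[>] p, m < b := nhdsWithin_le_nhds (eventually_lt_nhds (hC hp).2)
  obtain ⟨m, hlt, hmb, hm⟩ := (hpm.and (hpb.and self_mem_nhdsWithin)).exists
  have eq_of_le {x : ℝ} (hx : x ∈ C) (hxm : x ≤ m) : x = p :=
    ((C.min'_le x hx).eq_or_lt.resolve_right fun h => (hlt x hx h).not_ge hxm).symm
  refine ⟨m, ⟨(hC hp).1.trans hm, hmb⟩, fun hmC => (mem_Ioi.1 hm).ne' (eq_of_le hmC le_rfl),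
    fun x hx y hy => (eq_of_le hx.1 hx.2.le).trans (eq_of_le hy.1 hy.2.le).symm, ?_⟩
  rw [← Finset.card_erase_of_mem hp]
  refine Finset.card_le_card fun x hx => ?_
  rw [Finset.mem_filter] at hx
  exact Finset.mem_erase.2 ⟨(hm.trans hx.2).ne', hx.1⟩

theorem exists_isCut {n : ℕ} {C : Finset ℝ} {a b : ℝ} (hab : a < b)
    (hC : (C : Set ℝ) ⊆ Ioo a b) (hcard : C.card ≤ n + 1) : ∃ X, IsCut X (n + 1) C a b := by
  have ha : a ∉ (C : Set ℝ) := fun h => (hC h).1.false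
  induction n generalizing C a with
  | zero =>
    exact ⟨_, (IsCut.singleton b).cons hab ha (fun h => (hC h).2.false)
      ((Finset.card_le_one_iff_subsingleton.1 hcard).anti inter_subset_left)⟩
  | succ n ih =>
    obtain ⟨m, hm, hmC, hfirst, hrest⟩ := exists_separating_first hab hC
    have hfilter : ((C.filter (m < ·) : Finset ℝ) : Set ℝ) = ↑C ∩ Ioi m := by
      ext; simp
    obtain ⟨X, hX⟩ := ih (C := C.filter (m < ·)) hm.2
      (hfilter.trans_subset fun x hx => ⟨hx.2, (hC hx.1).2⟩) (by lia) (by simp)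
    exact ⟨_, (hfilter ▸ hX).cons hm.1 ha hmC hfirst⟩

theorem crossings_subset_Ioo {ι : Type*} {a b : ι → ℝ} {g : ι → ℝ → ℝ} (i : ι) :
    crossings a b g i ⊆ Ioo (a i) (b i) := fun _ ⟨_, hx⟩ => hx.2.1

theorem IsSmallBend.exists_isCut_of_unbent {ι : Type*} [Fintype ι] {T : Set ℝ} {a b s : ι → ℝ}
    {η : ℝ} (h : IsSmallBend T a b s η) {i : ι} (hi : s i = 0) {n : ℕ}
    (hcard : Fintype.card ι ≤ n + 2) :
    ∃ X, IsCut X (n + 1) (crossings a b (bentChords η s a b) i) (a i) (b i) ∧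
      ∀ k < n + 1, AffineOnIcc (bentChords η s a b i) (X k) (X (k + 1)) := by
  classical
  obtain ⟨C, hC, hCcard⟩ := h.isArrangement.exists_finset_eq_crossings (i := i)
    (S := Finset.univ.erase i) fun j x hj => by simp [hj.1.symm]
  rw [Finset.card_erase_of_mem (Finset.mem_univ i), Finset.card_univ] at hCcard
  obtain ⟨X, hX⟩ := exists_isCut (n := n) (h.left_lt_right i)
    (hC.trans_subset (crossings_subset_Ioo i)) (by lia)
  have haff : AffineOnIcc (bentChords η s a b i) (a i) (b i) := by
    rw [bentChords, hi]
    exact affineOnIcc_bentChord_zero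
  exact ⟨X, hC ▸ hX, fun k hk => haff.mono (hX.mem_Icc hk.le).1 (hX.mem_Icc hk).2⟩

theorem IsSmallBend.exists_isCut_of_parallel {ι : Type*} [Fintype ι] {T : Set ℝ} {a b s : ι → ℝ}
    {η : ℝ} (h : IsSmallBend T a b s η) {i j : ι} (hji : j ≠ i) (ha : a i = a j)
    {n : ℕ} (hcard : Fintype.card ι ≤ n + 3) :
    ∃ X, IsCut X (n + 2) (crossings a b (bentChords η s a b) i) (a i) (b i) ∧
      ∀ k < n + 2, AffineOnIcc (bentChords η s a b i) (X k) (X (k + 1)) := by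
  classical
  obtain ⟨C, hC, hCcard⟩ := h.isArrangement.exists_finset_eq_crossings (i := i)
    (S := (Finset.univ.erase i).erase j) fun k x hk => by
      have hkj : k ≠ j := by
        rintro rfl
        exact h.left_ne_of_crossAt hk ha
      simp [hkj, hk.1.symm]
  rw [Finset.card_erase_of_mem (by simpa using hji), Finset.card_erase_of_mem (Finset.mem_univ i),
    Finset.card_univ] at hCcard
  have hCm : (C : Set ℝ) ⊆ Ioo (a i + η) (b i) := by
    rintro x hx
    obtain ⟨k, hk⟩ := hC ▸ hx
    exact ⟨h.apex_lt_of_crossAt hk, hk.2.1.2⟩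
  obtain ⟨X, hX⟩ := exists_isCut (n := n) (h.left_add_lt_right i) hCm (by lia)
  have hinter : (C : Set ℝ) ∩ Ioi (a i + η) = C := inter_eq_left.2 fun x hx => (hCm hx).1
  rw [← hinter] at hX
  have hcut := hX.cons (a := a i) (lt_add_of_pos_right _ h.width_pos)
    (fun hx => (hCm hx).1.not_gt (lt_add_of_pos_right _ h.width_pos)) (fun hx => (hCm hx).1.false)
    fun x hx => ((hCm hx.1).1.not_gt hx.2).elim
  refine ⟨fun k => Nat.casesOn k (a i) X, hC ▸ hcut, fun
    | 0, _ => (h.affineOnIcc_left i).mono le_rfl hX.zero.le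
    | k + 1, hk => (h.affineOnIcc_right i).mono (hX.mem_Icc (by lia)).1
      (hX.mem_Icc (by lia)).2⟩

theorem IsSmallBend.exists_isCut {ι : Type*} [Fintype ι] {T : Set ℝ} {a b s : ι → ℝ} {η : ℝ}
    (h : IsSmallBend T a b s η) (i : ι) {n : ℕ} (hn : 0 < n) (hcard : Fintype.card ι ≤ n + 1)
    (hi : s i ≠ 0 → 2 ≤ n ∧ ∃ j ≠ i, a i = a j) :
    ∃ X, IsCut X n (crossings a b (bentChords η s a b) i) (a i) (b i) ∧
      ∀ k < n, AffineOnIcc (bentChords η s a b i) (X k) (X (k + 1)) := by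
  by_cases hs : s i = 0
  · obtain ⟨n, rfl⟩ := Nat.exists_eq_add_of_le' hn
    exact h.exists_isCut_of_unbent hs hcard
  · obtain ⟨hn, j, hji, ha⟩ := hi hs
    obtain ⟨n, rfl⟩ := Nat.exists_eq_add_of_le' hn
    exact h.exists_isCut_of_parallel hji ha hcard

/-! ## Path decompositions -/

section PathDecomposition

open SimpleGraph

variable {V ι : Type*} {G : SimpleGraph V} {u v : ι → V}

/-- The edges of `G` are partitioned into the paths `P i`, all of positive length, and an inner
vertex of one of these paths lies on no other one. -/
structure IsPathDecomposition (P : ∀ i, G.Walk (u i) (v i)) : Prop where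
  isPath : ∀ i, (P i).IsPath
  length_pos : ∀ i, 0 < (P i).length
  exists_mem_edges : ∀ e ∈ G.edgeSet, ∃ i, e ∈ (P i).edges
  eq_of_mem_edges : ∀ {i j e}, e ∈ (P i).edges → e ∈ (P j).edges → i = j
  eq_of_inner : ∀ {i j w}, w ∈ (P i).support → w ≠ u i → w ≠ v i → w ∈ (P j).support → i = j

/-- A vertex which is an inner vertex of none of the paths `P i`. -/
def IsTerminal (P : ∀ i, G.Walk (u i) (v i)) (w : V) : Prop :=
  ∀ i, w ∈ (P i).support → w = u i ∨ w = v i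

theorem mem_edges_of_degree_eq_two {x y w z : V} {p : G.Walk x y} [Fintype (G.neighborSet w)]
    (hp : p.IsPath) (hw : w ∈ p.support) (hwx : w ≠ x) (hwy : w ≠ y) (hdeg : G.degree w = 2)
    (hz : G.Adj w z) : s(w, z) ∈ p.edges := by
  obtain ⟨k, rfl, hk⟩ := Walk.mem_support_iff_exists_getVert.1 hw
  have hk0 : k ≠ 0 := fun h => hwx (by simp [h])
  have hkl : k < p.length := hk.lt_of_ne fun h => hwy (by simp [h])
  have hsub : p.toSubgraph.neighborSet (p.getVert k) = G.neighborSet (p.getVert k) := by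
    refine Set.eq_of_subset_of_ncard_le (Subgraph.neighborSet_subset _ _) ?_ (toFinite _)
    rw [hp.ncard_neighborSet_toSubgraph_internal_eq_two hk0 hkl, ← G.coe_neighborFinset,
      Set.ncard_coe_finset, G.card_neighborFinset_eq_degree, hdeg]
  exact Walk.adj_toSubgraph_iff_mem_edges.1 (hsub.ge hz)

theorem isPathDecomposition_of_degree_eq_two [G.LocallyFinite] {P : ∀ i, G.Walk (u i) (v i)}
    (hpath : ∀ i, (P i).IsPath) (hpos : ∀ i, 0 < (P i).length)
    (hcover : ∀ e ∈ G.edgeSet, ∃ i, e ∈ (P i).edges)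
    (hdisj : ∀ i j, i ≠ j → ∀ e ∈ (P i).edges, e ∉ (P j).edges)
    (hdeg : ∀ i, ∀ w ∈ (P i).support, w ≠ u i → w ≠ v i → G.degree w = 2) :
    IsPathDecomposition P := by
  have eq_of_mem_edges {i j : ι} {e : Sym2 V} (hi : e ∈ (P i).edges) (hj : e ∈ (P j).edges) :
      i = j := by
    by_contra hij
    exact hdisj i j hij e hi hj
  refine ⟨hpath, hpos, hcover, eq_of_mem_edges, fun {i j w} hwi hwu hwv hwj => ?_⟩
  obtain ⟨e, he, hwe⟩ :=
    (Walk.mem_support_iff_exists_mem_edges_of_not_nil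
      (Walk.not_nil_iff_lt_length.2 (hpos j))).1 hwj
  obtain ⟨z, rfl⟩ := Sym2.mem_iff_exists.1 hwe
  exact eq_of_mem_edges (mem_edges_of_degree_eq_two (hpath i) hwi hwu hwv (hdeg i w hwi hwu hwv)
    ((P j).adj_of_mem_edges he)) he

theorem exists_oriented_walk {x y : V} (p : G.Walk x y) {t : V → ℝ} (hxy : t x ≠ t y) :
    ∃ (x' y' : V) (q : G.Walk x' y'), t x' < t y' ∧ (p.IsPath → q.IsPath) ∧
      q.length = p.length ∧ (∀ e, e ∈ q.edges ↔ e ∈ p.edges) ∧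
      (∀ w, w ∈ q.support ↔ w ∈ p.support) ∧ ∀ w, w ≠ x' → w ≠ y' → w ≠ x ∧ w ≠ y := by
  rcases hxy.lt_or_gt with h | h
  · exact ⟨x, y, p, h, id, rfl, fun _ => Iff.rfl, fun _ => Iff.rfl, fun _ => And.intro⟩
  · exact ⟨y, x, p.reverse, h, Walk.IsPath.reverse, p.length_reverse, by simp, by simp,
      fun _ hy hx => ⟨hx, hy⟩⟩

namespace IsPathDecomposition

variable {P : ∀ i, G.Walk (u i) (v i)} {w : V} {i j : ι}

theorem left_ne_right (h : IsPathDecomposition P) (i : ι) : u i ≠ v i := fun he => by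
  have h0 : 0 = (P i).length := (h.isPath i).getVert_injOn (Nat.zero_le _) (le_refl (P i).length)
    (by rw [Walk.getVert_zero, Walk.getVert_length, he])
  exact (h.length_pos i).ne h0

theorem isTerminal_left (h : IsPathDecomposition P) (i : ι) : IsTerminal P (u i) := by
  intro j hj
  by_contra! hne
  obtain rfl := h.eq_of_inner hj hne.1 hne.2 (P i).start_mem_support
  exact hne.1 rfl

theorem isTerminal_right (h : IsPathDecomposition P) (i : ι) : IsTerminal P (v i) := by
  intro j hj
  by_contra! hne
  obtain rfl := h.eq_of_inner hj hne.1 hne.2 (P i).end_mem_support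
  exact hne.2 rfl

theorem exists_oriented (h : IsPathDecomposition P) {t : V → ℝ} (ht : Function.Injective t) :
    ∃ (u' v' : ι → V) (Q : ∀ i, G.Walk (u' i) (v' i)), IsPathDecomposition Q ∧
      (∀ i, (Q i).length = (P i).length) ∧ ∀ i, t (u' i) < t (v' i) := by
  choose u' v' Q hlt hpath hlen hedges hsupport hends using
    fun i => exists_oriented_walk (P i) (ht.ne (h.left_ne_right i))
  refine ⟨u', v', Q, ⟨fun i => hpath i (h.isPath i), fun i => hlen i ▸ h.length_pos i, ?_, ?_, ?_⟩,
    hlen, hlt⟩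
  · simpa only [hedges] using h.exists_mem_edges
  · exact fun hi hj => h.eq_of_mem_edges ((hedges _ _).1 hi) ((hedges _ _).1 hj)
  · intro i j w hwi hwu hwv hwj
    obtain ⟨hwu, hwv⟩ := hends i w hwu hwv
    exact h.eq_of_inner ((hsupport i w).1 hwi) hwu hwv ((hsupport j w).1 hwj)

theorem exists_extension (h : IsPathDecomposition P) {β : Type*} {φ : ι → ℕ → β} {ψ : V → β}
    (hleft : ∀ i, φ i 0 = ψ (u i)) (hright : ∀ i, φ i (P i).length = ψ (v i)) :
    ∃ F : V → β, (∀ i, ∀ k ≤ (P i).length, F ((P i).getVert k) = φ i k) ∧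
      ∀ w, IsTerminal P w → F w = ψ w := by
  have hF (w : V) : ∃ z, (∀ i, ∀ k ≤ (P i).length, (P i).getVert k = w → z = φ i k) ∧
      (IsTerminal P w → z = ψ w) := by
    by_cases hw : IsTerminal P w
    · refine ⟨ψ w, fun i k hk hkw => ?_, fun _ => rfl⟩
      rcases hw i (hkw ▸ (P i).getVert_mem_support k) with rfl | rfl
      · obtain rfl : k = 0 := (h.isPath i).getVert_injOn hk (Nat.zero_le _)
          (hkw.trans (P i).getVert_zero.symm)
        exact (hleft i).symm
      · obtain rfl : k = (P i).length := (h.isPath i).getVert_injOn hk (le_refl (P i).length)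
          (hkw.trans (P i).getVert_length.symm)
        exact (hright i).symm
    · obtain ⟨j, hwj, hwu, hwv⟩ : ∃ j, w ∈ (P j).support ∧ w ≠ u j ∧ w ≠ v j := by
        simpa [IsTerminal] using hw
      obtain ⟨l, rfl, hl⟩ := Walk.mem_support_iff_exists_getVert.1 hwj
      refine ⟨φ j l, fun i k hk hkl => ?_, fun ht => absurd ht hw⟩
      obtain rfl := h.eq_of_inner hwj hwu hwv (hkl ▸ (P i).getVert_mem_support k)
      rw [(h.isPath j).getVert_injOn hk hl hkl]
  choose F hF using hF
  exact ⟨F, fun i k hk => (hF _).1 i k hk rfl, fun w => (hF w).2⟩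

theorem eq_of_length_eq_one (h : IsPathDecomposition P) (hu : u i = u j) (hv : v i = v j)
    (hi : (P i).length = 1) (hj : (P j).length = 1) : i = j := by
  have mem_edges {k : ι} (hk : (P k).length = 1) : s(u k, v k) ∈ (P k).edges :=
    (Walk.mk_mem_edges_iff_exists _).2 ⟨0, by lia, by
      rw [Walk.getVert_zero, zero_add, ← hk, Walk.getVert_length]⟩
  refine h.eq_of_mem_edges (mem_edges hi) ?_
  rw [hu, hv]
  exact mem_edges hj

theorem exists_isSmallBend [Finite V] [Finite ι] (h : IsPathDecomposition P) {t : V → ℝ}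
    (ht : Function.Injective t) (hgen : ChordGeneric (range t)) (hlt : ∀ i, t (u i) < t (v i)) :
    ∃ η s, IsSmallBend (range t) (t ∘ u) (t ∘ v) s η ∧
      ∀ i, s i ≠ 0 → 2 ≤ (P i).length ∧ ∃ j ≠ i, t (u i) = t (u j) := by
  classical
  obtain ⟨n, hn⟩ := Countable.exists_injective_nat ι
  obtain ⟨η, s, hs, hs0⟩ := _root_.exists_isSmallBend (finite_range t) hgen
    (a := t ∘ u) (b := t ∘ v)
    (c := fun i => if 2 ≤ (P i).length ∧ ∃ j ≠ i, u i = u j then (n i : ℝ) + 1 else 0)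
    (fun i => mem_range_self _) (fun i => mem_range_self _) hlt (by
      intro i j hij hu hv
      have hi : ∃ k ≠ i, u i = u k := ⟨j, hij.symm, ht hu⟩
      have hj : ∃ k ≠ j, u j = u k := ⟨i, hij, (ht hu).symm⟩
      have hnij := hn.ne hij
      have hlen := fun hi hj => hij (h.eq_of_length_eq_one (ht hu) (ht hv) hi hj)
      have := h.length_pos i
      have := h.length_pos j
      simp only [hi, hj, and_true]
      split_ifs
      · simpa using hnij
      · exact Nat.cast_add_one_ne_zero _
      · exact (Nat.cast_add_one_ne_zero _).symm
      · exact (hlen (by lia) (by lia)).elim)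
  refine ⟨η, s, hs, fun i hi => ?_⟩
  obtain ⟨hlen, j, hji, huij⟩ := of_not_not fun hc => hi (hs0 i (if_neg hc))
  exact ⟨hlen, j, hji, congrArg t huij⟩

end IsPathDecomposition

/-! ## Polyline drawings -/

/-- The path `P i` is drawn along the curve `y = g i x`, `a i ≤ x ≤ b i`, of an arrangement: its
`k`-th vertex is placed over the `k`-th point of a cut of the curve into straight pieces. -/
structure IsPolylineDrawing (P : ∀ i, G.Walk (u i) (v i)) (a b : ι → ℝ) (g : ι → ℝ → ℝ)
    (X : ι → ℕ → ℝ) (pos : V → ℝ × ℝ) : Prop where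
  isPathDecomposition : IsPathDecomposition P
  isArrangement : IsArrangement a b g
  isCut : ∀ i, IsCut (X i) (P i).length (crossings a b g i) (a i) (b i)
  affineOnIcc : ∀ i, ∀ k < (P i).length, AffineOnIcc (g i) (X i k) (X i (k + 1))
  pos_getVert : ∀ i, ∀ k ≤ (P i).length, pos ((P i).getVert k) = (X i k, g i (X i k))
  injOn_isTerminal : InjOn pos {w | IsTerminal P w}
  notMem_of_isTerminal : ∀ i w, IsTerminal P w → pos w ∉ (Ioo (a i) (b i)).graphOn (g i)

namespace IsPolylineDrawing

variable {P : ∀ i, G.Walk (u i) (v i)} {a b : ι → ℝ} {g : ι → ℝ → ℝ} {X : ι → ℕ → ℝ}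
  {pos : V → ℝ × ℝ} {i j : ι} {k l : ℕ} {w x y x' y' : V} {z : ℝ × ℝ} {r : ℝ}

theorem pos_left (h : IsPolylineDrawing P a b g X pos) (i : ι) :
    pos (u i) = (a i, g i (a i)) := by
  rw [← (h.isCut i).zero, ← h.pos_getVert i 0 (Nat.zero_le _), Walk.getVert_zero]

theorem pos_right (h : IsPolylineDrawing P a b g X pos) (i : ι) :
    pos (v i) = (b i, g i (b i)) := by
  rw [← (h.isCut i).last, ← h.pos_getVert i _ le_rfl, Walk.getVert_length]

theorem eq_or_eq_or_mem_of_mem_curve (h : IsPolylineDrawing P a b g X pos)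
    (hz : z ∈ (Icc (a i) (b i)).graphOn (g i)) :
    z = pos (u i) ∨ z = pos (v i) ∨ z ∈ (Ioo (a i) (b i)).graphOn (g i) := by
  obtain ⟨r, hr, rfl⟩ := hz
  rcases hr.1.eq_or_lt with rfl | hlt
  · exact .inl (h.pos_left i).symm
  rcases hr.2.eq_or_lt with rfl | hgt
  · exact .inr (.inl (h.pos_right i).symm)
  exact .inr (.inr ⟨r, ⟨hlt, hgt⟩, rfl⟩)

theorem mem_support_of_isTerminal (h : IsPolylineDrawing P a b g X pos) (hw : IsTerminal P w)
    (hwi : pos w ∈ (Icc (a i) (b i)).graphOn (g i)) : w ∈ (P i).support := by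
  rcases h.eq_or_eq_or_mem_of_mem_curve hwi with hpos | hpos | hmem
  · exact h.injOn_isTerminal hw (h.isPathDecomposition.isTerminal_left i) hpos ▸
      (P i).start_mem_support
  · exact h.injOn_isTerminal hw (h.isPathDecomposition.isTerminal_right i) hpos ▸
      (P i).end_mem_support
  · exact absurd hmem (h.notMem_of_isTerminal i w hw)

theorem fst_notMem_crossings (h : IsPolylineDrawing P a b g X pos) (hw : w ∈ (P i).support) :
    (pos w).1 ∉ crossings a b g i := by
  obtain ⟨k, rfl, hk⟩ := Walk.mem_support_iff_exists_getVert.1 hw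
  rw [h.pos_getVert i k hk]
  exact (h.isCut i).notMem k hk

theorem mem_openCurve_of_inner (h : IsPolylineDrawing P a b g X pos) (hw : w ∈ (P i).support)
    (hwu : w ≠ u i) (hwv : w ≠ v i) : pos w ∈ (Ioo (a i) (b i)).graphOn (g i) := by
  obtain ⟨k, rfl, hk⟩ := Walk.mem_support_iff_exists_getVert.1 hw
  have hk0 : 0 < k := Nat.pos_of_ne_zero fun h => hwu (by simp [h])
  have hkl : k < (P i).length := hk.lt_of_ne fun h => hwv (by simp [h])
  have hmono := (h.isCut i).strictMono
  exact ⟨X i k, ⟨(h.isCut i).zero ▸ hmono hk0, (h.isCut i).last ▸ hmono hkl⟩,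
    (h.pos_getVert i k hk).symm⟩

theorem eq_of_inner_of_mem_curve (h : IsPolylineDrawing P a b g X pos) (hw : w ∈ (P j).support)
    (hwu : w ≠ u j) (hwv : w ≠ v j) (hwi : pos w ∈ (Icc (a i) (b i)).graphOn (g i)) :
    j = i := by
  by_contra hji
  have hwj := h.mem_openCurve_of_inner hw hwu hwv
  rcases h.eq_or_eq_or_mem_of_mem_curve hwi with hpos | hpos | hmem
  · exact h.notMem_of_isTerminal j _ (h.isPathDecomposition.isTerminal_left i) (hpos ▸ hwj)
  · exact h.notMem_of_isTerminal j _ (h.isPathDecomposition.isTerminal_right i) (hpos ▸ hwj)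
  · rw [mem_graphOn] at hwj hmem
    exact h.fst_notMem_crossings hw ⟨i, hji, hwj.1, hmem.1, hwj.2.trans hmem.2.symm⟩

theorem mem_support (h : IsPolylineDrawing P a b g X pos)
    (hw : pos w ∈ (Icc (a i) (b i)).graphOn (g i)) : w ∈ (P i).support := by
  by_cases ht : IsTerminal P w
  · exact h.mem_support_of_isTerminal ht hw
  · obtain ⟨j, hwj, hwu, hwv⟩ : ∃ j, w ∈ (P j).support ∧ w ≠ u j ∧ w ≠ v j := by
      simpa [IsTerminal] using ht
    exact h.eq_of_inner_of_mem_curve hwj hwu hwv hw ▸ hwj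

theorem pos_mem_curve (h : IsPolylineDrawing P a b g X pos) (hw : w ∈ (P i).support) :
    pos w ∈ (Icc (a i) (b i)).graphOn (g i) := by
  obtain ⟨k, rfl, hk⟩ := Walk.mem_support_iff_exists_getVert.1 hw
  exact ⟨X i k, (h.isCut i).mem_Icc hk, (h.pos_getVert i k hk).symm⟩

theorem injective (h : IsPolylineDrawing P a b g X pos) : Function.Injective pos := by
  have eq_of_mem_support {w w' : V} (hpos : pos w = pos w') {i : ι} (hw : w ∈ (P i).support) :
      w = w' := by
    have hw' : w' ∈ (P i).support := h.mem_support (hpos ▸ h.pos_mem_curve hw)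
    obtain ⟨k, rfl, hk⟩ := Walk.mem_support_iff_exists_getVert.1 hw
    obtain ⟨l, rfl, hl⟩ := Walk.mem_support_iff_exists_getVert.1 hw'
    rw [h.pos_getVert i k hk, h.pos_getVert i l hl] at hpos
    rw [(h.isCut i).strictMono.injective (Prod.ext_iff.1 hpos).1]
  intro w w' hpos
  by_cases hw : ∃ i, w ∈ (P i).support
  · exact eq_of_mem_support hpos hw.choose_spec
  by_cases hw' : ∃ i, w' ∈ (P i).support
  · exact (eq_of_mem_support hpos.symm hw'.choose_spec).symm
  push Not at hw hw'
  exact h.injOn_isTerminal (fun i hi => absurd hi (hw i)) (fun i hi => absurd hi (hw' i)) hpos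

theorem notMem_support_of_crossAt (h : IsPolylineDrawing P a b g X pos)
    (hr : CrossAt a b g i j r) (hwi : w ∈ (P i).support) : w ∉ (P j).support := by
  intro hwj
  have fst_pos {m n : ι} (hmn : m ≠ n) (hm : w ∈ (P m).support) (hn : w ∈ (P n).support) :
      (pos w).1 = a m ∨ (pos w).1 = b m := by
    by_cases hwu : w = u m
    · exact .inl (by rw [hwu, h.pos_left])
    by_cases hwv : w = v m
    · exact .inr (by rw [hwv, h.pos_right])
    exact absurd (h.isPathDecomposition.eq_of_inner hm hwu hwv hn) hmn
  have hl := h.isArrangement.left_ne hr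
  have hr' := h.isArrangement.right_ne hr
  obtain ⟨hij, ⟨hai, hbi⟩, ⟨haj, hbj⟩, -⟩ := hr
  rcases fst_pos hij hwi hwj with hi | hi <;> rcases fst_pos hij.symm hwj hwi with hj | hj
  · exact hl (hi.symm.trans hj)
  · linarith
  · linarith
  · exact hr' (hi.symm.trans hj)

theorem exists_piece (h : IsPolylineDrawing P a b g X pos) (hxy : G.Adj x y) :
    ∃ i, ∃ k < (P i).length, s((P i).getVert k, (P i).getVert (k + 1)) = s(x, y) := by
  obtain ⟨i, hi⟩ := h.isPathDecomposition.exists_mem_edges s(x, y) hxy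
  exact ⟨i, (Walk.mk_mem_edges_iff_exists _).1 hi⟩

theorem segment_eq (h : IsPolylineDrawing P a b g X pos) (hk : k < (P i).length)
    (hxy : s((P i).getVert k, (P i).getVert (k + 1)) = s(x, y)) :
    segment ℝ (pos x) (pos y) = (Icc (X i k) (X i (k + 1))).graphOn (g i) := by
  rw [← (h.affineOnIcc i k hk).segment_eq_graphOn ((h.isCut i).strictMono k.lt_succ_self),
    ← h.pos_getVert i k hk.le, ← h.pos_getVert i (k + 1) hk]
  rcases Sym2.eq_iff.1 hxy with ⟨rfl, rfl⟩ | ⟨rfl, rfl⟩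
  · rfl
  · exact segment_symm ..

theorem openSegment_eq (h : IsPolylineDrawing P a b g X pos) (hk : k < (P i).length)
    (hxy : s((P i).getVert k, (P i).getVert (k + 1)) = s(x, y)) :
    openSegment ℝ (pos x) (pos y) = (Ioo (X i k) (X i (k + 1))).graphOn (g i) := by
  rw [← (h.affineOnIcc i k hk).openSegment_eq_graphOn ((h.isCut i).strictMono k.lt_succ_self),
    ← h.pos_getVert i k hk.le, ← h.pos_getVert i (k + 1) hk]
  rcases Sym2.eq_iff.1 hxy with ⟨rfl, rfl⟩ | ⟨rfl, rfl⟩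
  · rfl
  · exact openSegment_symm ..

theorem segment_subset_curve (h : IsPolylineDrawing P a b g X pos) (hk : k < (P i).length)
    (hxy : s((P i).getVert k, (P i).getVert (k + 1)) = s(x, y)) :
    segment ℝ (pos x) (pos y) ⊆ (Icc (a i) (b i)).graphOn (g i) :=
  (h.segment_eq hk hxy).trans_subset (image_mono ((h.isCut i).Icc_subset hk))

theorem eq_or_eq_of_mem_segment (h : IsPolylineDrawing P a b g X pos) (hxy : G.Adj x y)
    (hw : pos w ∈ segment ℝ (pos x) (pos y)) : w = x ∨ w = y := by
  obtain ⟨i, k, hk, he⟩ := h.exists_piece hxy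
  obtain ⟨l, rfl, hl⟩ := Walk.mem_support_iff_exists_getVert.1
    (h.mem_support (h.segment_subset_curve hk he hw))
  rw [h.segment_eq hk he, h.pos_getVert i l hl, mem_graphOn] at hw
  have hmono := (h.isCut i).strictMono
  have hkl : k ≤ l := hmono.le_iff_le.1 hw.1.1
  have hlk : l ≤ k + 1 := hmono.le_iff_le.1 hw.1.2
  rw [← Sym2.mem_iff, ← he, Sym2.mem_iff]
  rcases hkl.eq_or_lt with rfl | hlt
  · exact .inl rfl
  · exact .inr (by rw [hlk.antisymm hlt])

theorem exists_pos_eq_of_mem_pieces (h : IsPolylineDrawing P a b g X pos)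
    (hl : l < (P i).length) (hkl : k < l)
    (hzk : z ∈ (Icc (X i k) (X i (k + 1))).graphOn (g i))
    (hzl : z ∈ (Icc (X i l) (X i (l + 1))).graphOn (g i)) : ∃ w, pos w = z := by
  rw [mem_graphOn] at hzk hzl
  have hfst : z.1 = X i l :=
    (hzk.1.2.trans ((h.isCut i).strictMono.monotone hkl)).antisymm hzl.1.1
  exact ⟨(P i).getVert l, by rw [h.pos_getVert i l hl.le, ← hfst, hzl.2]⟩

theorem exists_pos_eq_or_crossAt_of_ne (h : IsPolylineDrawing P a b g X pos) (hij : i ≠ j)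
    (hzi : z ∈ (Icc (a i) (b i)).graphOn (g i)) (hzj : z ∈ (Icc (a j) (b j)).graphOn (g j)) :
    (∃ w, pos w = z) ∨ CrossAt a b g i j z.1 := by
  rcases h.eq_or_eq_or_mem_of_mem_curve hzi with rfl | rfl | hi
  · exact .inl ⟨_, rfl⟩
  · exact .inl ⟨_, rfl⟩
  rcases h.eq_or_eq_or_mem_of_mem_curve hzj with rfl | rfl | hj
  · exact .inl ⟨_, rfl⟩
  · exact .inl ⟨_, rfl⟩
  rw [mem_graphOn] at hi hj
  exact .inr ⟨hij, hi.1, hj.1, hi.2.trans hj.2.symm⟩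

theorem inter_curves_subset_singleton (h : IsPolylineDrawing P a b g X pos)
    (hz : CrossAt a b g i j z.1) (hzi : g i z.1 = z.2) :
    (Icc (a i) (b i)).graphOn (g i) ∩ (Icc (a j) (b j)).graphOn (g j) ⊆ {z} := by
  rintro p ⟨hpi, hpj⟩
  rcases h.exists_pos_eq_or_crossAt_of_ne hz.1 hpi hpj with ⟨w, rfl⟩ | hp
  · exact absurd (h.mem_support hpj) (h.notMem_support_of_crossAt hz (h.mem_support hpi))
  · have hfst := h.isArrangement.eq_of_crossAt hp hz
    exact Prod.ext hfst (by rw [← (mem_graphOn.1 hpi).2, hfst, hzi])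

theorem exists_pos_eq_or_crossAt (h : IsPolylineDrawing P a b g X pos)
    (hk : k < (P i).length) (hl : l < (P j).length)
    (hne : s((P i).getVert k, (P i).getVert (k + 1)) ≠ s((P j).getVert l, (P j).getVert (l + 1)))
    (hzk : z ∈ (Icc (X i k) (X i (k + 1))).graphOn (g i))
    (hzl : z ∈ (Icc (X j l) (X j (l + 1))).graphOn (g j)) :
    (∃ w, pos w = z) ∨ CrossAt a b g i j z.1 := by
  rcases eq_or_ne i j with rfl | hij
  · rcases lt_trichotomy k l with hkl | rfl | hkl
    · exact .inl (h.exists_pos_eq_of_mem_pieces hl hkl hzk hzl)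
    · exact absurd rfl hne
    · exact .inl (h.exists_pos_eq_of_mem_pieces hk hkl hzl hzk)
  · exact h.exists_pos_eq_or_crossAt_of_ne hij (image_mono ((h.isCut i).Icc_subset hk) hzk)
      (image_mono ((h.isCut j).Icc_subset hl) hzl)

theorem mem_openSegment_of_crossAt (h : IsPolylineDrawing P a b g X pos)
    (hk : k < (P i).length) (hxy : s((P i).getVert k, (P i).getVert (k + 1)) = s(x, y))
    (hz : z ∈ segment ℝ (pos x) (pos y)) (hcross : CrossAt a b g i j z.1) :
    z ∈ openSegment ℝ (pos x) (pos y) := by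
  rw [h.segment_eq hk hxy, mem_graphOn] at hz
  rw [h.openSegment_eq hk hxy, mem_graphOn]
  exact ⟨(h.isCut i).mem_Ioo_of_mem hk ⟨j, hcross⟩ hz.1, hz.2⟩

theorem isGeomDrawing (h : IsPolylineDrawing P a b g X pos) : IsGeomDrawing G pos := by
  refine ⟨h.injective, fun x y hxy w => h.eq_or_eq_of_mem_segment hxy, ?_⟩
  intro x y x' y' hxy hxy' hne
  obtain ⟨i, k, hk, hek⟩ := h.exists_piece hxy
  obtain ⟨j, l, hl, hel⟩ := h.exists_piece hxy'
  have meet {z : ℝ × ℝ} (hz : z ∈ segment ℝ (pos x) (pos y) ∩ segment ℝ (pos x') (pos y')) :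
      (∃ w, pos w = z) ∨ CrossAt a b g i j z.1 :=
    h.exists_pos_eq_or_crossAt hk hl (by rwa [hek, hel]) (h.segment_eq hk hek ▸ hz.1)
      (h.segment_eq hl hel ▸ hz.2)
  by_cases hcross : ∃ z ∈ segment ℝ (pos x) (pos y) ∩ segment ℝ (pos x') (pos y'),
      CrossAt a b g i j z.1
  · obtain ⟨z, hz, hzc⟩ := hcross
    refine .inr ⟨z, (subset_antisymm ?_ (singleton_subset_iff.2 hz)),
      h.mem_openSegment_of_crossAt hk hek hz.1 hzc,
      h.mem_openSegment_of_crossAt hl hel hz.2 hzc.symm⟩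
    exact (inter_subset_inter (h.segment_subset_curve hk hek)
      (h.segment_subset_curve hl hel)).trans
      (h.inter_curves_subset_singleton hzc (mem_graphOn.1 (h.segment_subset_curve hk hek hz.1)).2)
  · refine .inl fun z hz => ?_
    obtain ⟨w, rfl⟩ := (meet hz).resolve_right fun hc => hcross ⟨z, hz, hc⟩
    exact ⟨mem_image_of_mem pos (h.eq_or_eq_of_mem_segment hxy hz.1),
      mem_image_of_mem pos (h.eq_or_eq_of_mem_segment hxy' hz.2)⟩

theorem pos_notMem_openSegment (h : IsPolylineDrawing P a b g X pos) (hxy : G.Adj x y) :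
    pos w ∉ openSegment ℝ (pos x) (pos y) := by
  intro hw
  rcases h.eq_or_eq_of_mem_segment hxy (openSegment_subset_segment ℝ _ _ hw) with rfl | rfl
  · exact hxy.ne (h.injective (left_mem_openSegment_iff.1 hw))
  · exact hxy.ne (h.injective (right_mem_openSegment_iff.1 hw))

theorem ne_of_segCross (h : IsPolylineDrawing P a b g X pos) (hxy : G.Adj x y)
    (hcross : SegCross pos x y x' y') : s(x, y) ≠ s(x', y') := by
  intro he
  obtain ⟨z, hz, -, -⟩ := hcross
  have hseg : segment ℝ (pos x') (pos y') = segment ℝ (pos x) (pos y) := by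
    rcases Sym2.eq_iff.1 he with ⟨rfl, rfl⟩ | ⟨rfl, rfl⟩
    · rfl
    · exact segment_symm ..
  rw [hseg, inter_self] at hz
  exact hxy.ne (h.injective ((hz.subset (left_mem_segment ..)).trans
    (hz.subset (right_mem_segment ..)).symm))

theorem exists_crossAt_of_segCross (h : IsPolylineDrawing P a b g X pos) (hk : k < (P i).length)
    (hek : s((P i).getVert k, (P i).getVert (k + 1)) = s(x, y)) (hxy' : G.Adj x' y')
    (hcross : SegCross pos x y x' y') :
    ∃ j l r, s((P j).getVert l, (P j).getVert (l + 1)) = s(x', y') ∧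
      CrossAt a b g i j r ∧ r ∈ Ioo (X i k) (X i (k + 1)) ∧ r ∈ Ioo (X j l) (X j (l + 1)) := by
  have hxy : G.Adj x y := (hek ▸ (P i).adj_getVert_succ hk : s(x, y) ∈ G.edgeSet)
  obtain ⟨j, l, hl, hel⟩ := h.exists_piece hxy'
  have hne := h.ne_of_segCross hxy hcross
  obtain ⟨z, -, hz, hz'⟩ := hcross
  have hzk := h.openSegment_eq hk hek ▸ hz
  have hzl := h.openSegment_eq hl hel ▸ hz'
  rcases h.exists_pos_eq_or_crossAt hk hl (by rwa [hek, hel])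
    (image_mono Ioo_subset_Icc_self hzk) (image_mono Ioo_subset_Icc_self hzl) with ⟨w, rfl⟩ | hc
  · exact absurd hz (h.pos_notMem_openSegment hxy)
  · exact ⟨j, l, z.1, hel, hc, (mem_graphOn.1 hzk).1, (mem_graphOn.1 hzl).1⟩

theorem isGeom1Planar (h : IsPolylineDrawing P a b g X pos) : IsGeom1Planar G pos := by
  refine ⟨h.isGeomDrawing, fun x y hxy => ?_⟩
  obtain ⟨i, k, hk, hek⟩ := h.exists_piece hxy
  rintro _ ⟨hadj₁, x₁, y₁, rfl, hcross₁⟩ _ ⟨hadj₂, x₂, y₂, rfl, hcross₂⟩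
  obtain ⟨j₁, l₁, r₁, he₁, hc₁, hrk₁, hrl₁⟩ :=
    h.exists_crossAt_of_segCross hk hek hadj₁ hcross₁
  obtain ⟨j₂, l₂, r₂, he₂, hc₂, hrk₂, hrl₂⟩ :=
    h.exists_crossAt_of_segCross hk hek hadj₂ hcross₂
  obtain rfl : r₁ = r₂ :=
    (h.isCut i).subsingleton k hk ⟨hrk₁, j₁, hc₁⟩ ⟨hrk₂, j₂, hc₂⟩
  obtain rfl : j₁ = j₂ := h.isArrangement.eq_of_common_crossing hc₁ hc₂
  obtain rfl : l₁ = l₂ :=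
    (h.isCut j₁).strictMono.monotone.pairwise_disjoint_on_Ioo_succ.eq
      (not_disjoint_iff.2 ⟨r₁, hrl₁, hrl₂⟩)
  rw [← he₁, ← he₂]

end IsPolylineDrawing

theorem IsSmallBend.pos_notMem_curve {T : Set ℝ} {a b s : ι → ℝ} {η r : ℝ}
    (h : IsSmallBend T a b s η) (hr : r ∈ T) (i : ι) :
    (r, r ^ 2) ∉ (Ioo (a i) (b i)).graphOn (bentChords η s a b i) := fun hmem =>
  have ⟨hri, heq⟩ := mem_graphOn.1 hmem
  (h.sq_lt i r hr hri).ne' heq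

theorem IsPathDecomposition.exists_isPolylineDrawing [Finite V] [Fintype ι]
    {P : ∀ i, G.Walk (u i) (v i)} (h : IsPathDecomposition P)
    (hlen : ∀ i, Fintype.card ι ≤ (P i).length + 1) {t : V → ℝ} (ht : Function.Injective t)
    (hgen : ChordGeneric (range t)) (hlt : ∀ i, t (u i) < t (v i)) :
    ∃ g X pos, IsPolylineDrawing P (t ∘ u) (t ∘ v) g X pos := by
  obtain ⟨η, s, hs, hbent⟩ := h.exists_isSmallBend ht hgen hlt
  choose X hX haff using fun i => hs.exists_isCut i (h.length_pos i) (hlen i) (hbent i)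
  obtain ⟨pos, hpos, hterm⟩ := h.exists_extension
    (φ := fun i k => (X i k, bentChords η s (t ∘ u) (t ∘ v) i (X i k)))
    (ψ := fun w => (t w, t w ^ 2))
    (fun i => by rw [(hX i).zero, hs.curve_left, Function.comp_apply])
    (fun i => by rw [(hX i).last, hs.curve_right, Function.comp_apply])
  refine ⟨_, X, pos, h, hs.isArrangement, hX, haff, hpos, fun w hw w' hw' heq => ?_,
    fun i w hw => ?_⟩
  · rw [hterm w hw, hterm w' hw'] at heq
    exact ht (Prod.ext_iff.1 heq).1
  · rw [hterm w hw]
    exact hs.pos_notMem_curve (mem_range_self w) i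

theorem IsPathDecomposition.geomOnePlanar [Finite V] [Fintype ι]
    {P : ∀ i, G.Walk (u i) (v i)} (h : IsPathDecomposition P)
    (hlen : ∀ i, Fintype.card ι ≤ (P i).length + 1) : GeomOnePlanar G := by
  obtain ⟨t, ht, hgen⟩ := exists_injective_chordGeneric_range V
  obtain ⟨u', v', Q, hQ, hQlen, hlt⟩ := h.exists_oriented ht
  obtain ⟨g, X, pos, hpos⟩ :=
    hQ.exists_isPolylineDrawing (fun i => (hlen i).trans_eq (by rw [hQlen])) ht hgen hlt
  exact ⟨pos, hpos.isGeom1Planar⟩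

end PathDecomposition

/-- Let `G` be a finite simple graph whose edge set is partitioned into `f` degree-2 paths
(`P i` is a simple path from `u i` to `v i` whose internal vertices have degree two in
`G`), each of length at least `f − 1`.  Then `G` is geometric 1-planar. -/
theorem stmt10 {V : Type*} [Fintype V] (G : SimpleGraph V) [DecidableRel G.Adj]
    (f : ℕ) (u v : Fin f → V) (P : ∀ i, G.Walk (u i) (v i))
    (hpath : ∀ i, (P i).IsPath)
    (hdeg2 : ∀ i, ∀ w ∈ (P i).support, w ≠ u i → w ≠ v i → G.degree w = 2)
    (hlen : ∀ i, f - 1 ≤ (P i).length)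
    (hcover : ∀ e : Sym2 V, e ∈ G.edgeSet ↔ ∃ i, e ∈ (P i).edges)
    (hdisj : ∀ i j, i ≠ j → ∀ e ∈ (P i).edges, e ∉ (P j).edges) :
    GeomOnePlanar G := by
  let I := {i : Fin f // 0 < (P i).length}
  have hcover' (e : Sym2 V) (he : e ∈ G.edgeSet) : ∃ i : I, e ∈ (P i).edges := by
    obtain ⟨i, hi⟩ := (hcover e).1 he
    exact ⟨⟨i, (P i).length_edges ▸ List.length_pos_of_mem hi⟩, hi⟩
  have hP : IsPathDecomposition fun i : I => P i :=
    isPathDecomposition_of_degree_eq_two (fun i => hpath i) (fun i => i.2) hcover'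
      (fun i j hij => hdisj i j (Subtype.val_injective.ne hij)) fun i => hdeg2 i
  refine hP.geomOnePlanar fun i => ?_
  calc Fintype.card I ≤ Fintype.card (Fin f) := Fintype.card_subtype_le _
    _ = f := Fintype.card_fin f
    _ ≤ (P i).length + 1 := Nat.sub_le_iff_le_add.1 (hlen i)
end
end
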